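/- arXiv:math/0611020 — 2 statements merged into one kernel-verified Lean document; each statement's English description precedes it below -/
import Mathlib

section
/- Let d be a positive integer and ℓ = (ℓ_1,...,ℓ_n) ∈ ℕ^n. There exists a nonzero strongly stable monomial ideal I in K[x_1,...,x_n] generated in degree d with ℓ(I) = ℓ if and only if ℓ is an M-vector with ℓ_2 ≤ d. -/
set_option synthInstance.maxHeartbeats 1000000
set_option maxHeartbeats 1000000

open MvPolynomial

namespace Paper

/-! ### Combinatorics of monomials -/

/-- a monomial in `n` variables, encoded by its exponent vector -/
abbrev Mono (n : ℕ) := Fin n →₀ ℕ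

/-- total degree of a monomial -/
def mdeg {n : ℕ} (u : Mono n) : ℕ := u.sum fun _ e => e

/-- `maxVar u` is the largest index (1-indexed) of a variable dividing `u`; `maxVar 1 = 0`. -/
def maxVar {n : ℕ} (u : Mono n) : ℕ := u.support.sup fun i => (i : ℕ) + 1

/-- `LexGT u v` : `u >_lex v` (lexicographic order with `x_1 > x_2 > ⋯ > x_n`). -/
def LexGT {n : ℕ} (u v : Mono n) : Prop :=
  ∃ i : Fin n, v i < u i ∧ ∀ j : Fin n, j < i → u j = v j

/-- strongly stable set of monomials -/
def SStableSet {n : ℕ} (V : Set (Mono n)) : Prop :=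
  ∀ u : Mono n, ∀ p q : Fin n, p < q → u + Finsupp.single q 1 ∈ V →
    u + Finsupp.single p 1 ∈ V

/-- `Dk V k = { u / x_k : u ∈ V, max(u) = k }` (here `k : Fin n` is the 0-indexed variable,
corresponding to the 1-indexed variable `k+1`) -/
def Dk {n : ℕ} (V : Set (Mono n)) (k : Fin n) : Set (Mono n) :=
  {w | w + Finsupp.single k 1 ∈ V ∧ maxVar (w + Finsupp.single k 1) = (k : ℕ) + 1}

/-- `Mle j W = { u ∈ W : max(u) ≤ j }` -/
def Mle {n : ℕ} (j : ℕ) (W : Set (Mono n)) : Set (Mono n) := {u ∈ W | maxVar u ≤ j}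

/-- `L` is a lexsegment set of monomials inside `K[x_1,…,x_k]`. -/
def LexSegIn {n : ℕ} (k : ℕ) (L : Set (Mono n)) : Prop :=
  (∀ u ∈ L, maxVar u ≤ k) ∧
  ∀ u ∈ L, ∀ v : Mono n, mdeg v = mdeg u → maxVar v ≤ k → LexGT v u → v ∈ L

/-- `V` is a `d`-linear lexsegment set of monomials of degree `d`. -/
def DLinearLexSeg {n : ℕ} (d : ℕ) (V : Set (Mono n)) : Prop :=
  (∀ u ∈ V, mdeg u = d) ∧ SStableSet V ∧
    ∀ k : Fin n, LexSegIn ((k : ℕ) + 1) (Dk V k)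

/-! ### Ideal-level notions -/

variable {n : ℕ} {K : Type} [Field K]

/-- `I` is a monomial ideal. -/
def MonomialIdeal (I : Ideal (MvPolynomial (Fin n) K)) : Prop :=
  ∀ p ∈ I, ∀ m ∈ p.support, (monomial m (1 : K)) ∈ I

/-- `u` is a minimal monomial generator of the monomial ideal `I`. -/
def MinGen (I : Ideal (MvPolynomial (Fin n) K)) (u : Mono n) : Prop :=
  monomial u (1 : K) ∈ I ∧ ∀ v : Mono n, v ≤ u → v ≠ u → monomial v (1 : K) ∉ I

/-- stable monomial ideal -/
def StableIdeal (I : Ideal (MvPolynomial (Fin n) K)) : Prop :=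
  MonomialIdeal I ∧
  ∀ u : Mono n, ∀ q : Fin n, maxVar u = (q : ℕ) + 1 → monomial u (1 : K) ∈ I →
    ∀ p : Fin n, p < q →
      monomial (u - Finsupp.single q 1 + Finsupp.single p 1) (1 : K) ∈ I

/-- strongly stable monomial ideal -/
def SStableIdeal (I : Ideal (MvPolynomial (Fin n) K)) : Prop :=
  MonomialIdeal I ∧
  ∀ u : Mono n, ∀ q : Fin n, 0 < u q → monomial u (1 : K) ∈ I →
    ∀ p : Fin n, p < q →
      monomial (u - Finsupp.single q 1 + Finsupp.single p 1) (1 : K) ∈ I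

/-- the set of (exponent vectors of) monomials of degree `k` lying in `I` -/
def monSlice (I : Ideal (MvPolynomial (Fin n) K)) (k : ℕ) : Set (Mono n) :=
  {u | mdeg u = k ∧ monomial u (1 : K) ∈ I}

/-- homogeneous (graded) ideal -/
def HomIdeal (I : Ideal (MvPolynomial (Fin n) K)) : Prop :=
  ∀ p ∈ I, ∀ k : ℕ, homogeneousComponent k p ∈ I

/-! ### Graded components and Hilbert functions -/

/-- the degree-`z` homogeneous component of `I`, as a `K`-subspace -/
noncomputable def hComp (I : Ideal (MvPolynomial (Fin n) K)) (z : ℤ) :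
    Submodule K (MvPolynomial (Fin n) K) :=
  if 0 ≤ z then
    (Submodule.restrictScalars K I) ⊓ homogeneousSubmodule (Fin n) K z.toNat
  else ⊥

/-- Hilbert function `H(I,t)` of the ideal `I` -/
noncomputable def hfI (I : Ideal (MvPolynomial (Fin n) K)) (t : ℕ) : ℕ :=
  Module.finrank K (hComp I (t : ℤ))

/-- Hilbert function `H(S/I,t)` of the quotient `S/I` -/
noncomputable def hfQ (I : Ideal (MvPolynomial (Fin n) K)) (t : ℕ) : ℕ :=
  Module.finrank K
    (homogeneousSubmodule (Fin n) K t ⧸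
      Submodule.comap (homogeneousSubmodule (Fin n) K t).subtype
        (Submodule.restrictScalars K I))

/-! ### Macaulay operators and M-vectors -/

/-- Macaulay upper operator `a^{⟨t⟩}` (`macUp t a`):
if `a = C(a_t,t) + ⋯ + C(a_j,j)` is the `t`-th Macaulay representation then
`a^{⟨t⟩} = C(a_t+1,t+1) + ⋯ + C(a_j+1,j+1)`; also `0^{⟨t⟩} = 0`. -/
noncomputable def macUp : ℕ → ℕ → ℕ
  | 0, _ => 0
  | _ + 1, 0 => 0
  | (t + 1), (a + 1) =>
    let c := sSup {c : ℕ | Nat.choose c (t + 1) ≤ a + 1}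
    Nat.choose (c + 1) (t + 2) + macUp t ((a + 1) - Nat.choose c (t + 1))

/-- Macaulay operator `a^{(t)}` (`macSq t a`):
if `a = C(a_t,t) + ⋯ + C(a_j,j)` is the `t`-th Macaulay representation then
`a^{(t)} = C(a_t+1,t) + ⋯ + C(a_j+1,j)`; also `0^{(t)} = 0`. -/
noncomputable def macSq : ℕ → ℕ → ℕ
  | 0, _ => 0
  | _ + 1, 0 => 0
  | (t + 1), (a + 1) =>
    let c := sSup {c : ℕ | Nat.choose c (t + 1) ≤ a + 1}
    Nat.choose (c + 1) (t + 1) + macSq t ((a + 1) - Nat.choose c (t + 1))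

/-- `(ℓ 0, ℓ 1, …, ℓ (n-1)) = (h_0,…,h_{n-1})` is an M-vector:
`h_0 = 1` and `h_{t+1} ≤ h_t^{⟨t⟩}` for all `t ≥ 1`. -/
def MVector {n : ℕ} (ℓ : Fin n → ℕ) : Prop :=
  (∀ h0 : 0 < n, ℓ ⟨0, h0⟩ = 1) ∧
  ∀ t : ℕ, 1 ≤ t → ∀ (h1 : t < n) (h2 : t + 1 < n),
    ℓ ⟨t + 1, h2⟩ ≤ macUp t (ℓ ⟨t, h1⟩)

/-!
Mapping an ideal to its minimal generators turns the claim into one about finite strongly stable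
sets `V` of monomials of degree `d`. Dividing the elements of `V` with largest variable `x_{k+1}` by
`x_{k+1}` gives a strongly stable set `D` in degree `d - 1`, and multiplying the elements of `D` not
involving `x_{k+1}` by `x_k` gives elements of `V` with largest variable `x_k`. So the growth of `ℓ`
for `V` is bounded by the growth, for `D`, of the number of elements in the first `k` and the first
`k + 1` variables, and these numbers are the partial sums of the sequence `ℓ` of `D`; by induction
on the degree and on `k` the bound is Macaulay's.

Conversely, take for each `k` the `ℓ_k` lexicographically largest monomials of degree `d - 1` in the
first `k` variables and multiply them by `x_k`. The lexicographic rank of a monomial is read off a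
Macaulay representation, and passing from `k` to `k + 1` variables applies `a ↦ a^{⟨k-1⟩}` to the
rank, so the M-vector condition makes the union strongly stable.
-/

/-! ### Macaulay representations -/

section Macaulay

open Finset

/-- The number `C(T_{t-1} + t-1 + j, t+j) + ⋯ + C(T_1 + 1 + j, 2+j) + C(T_0 + j, 1+j)`.
For `T` monotone and `j = 0` this is the `t`-th Macaulay representation of a number `a`, with
`a_{i+1} = T_i + i` and its final terms dropped as long as `T_i = 0`; then `j = 1` gives
`a^{⟨t⟩}`. -/
def macaulaySum (j : ℕ) (T : ℕ → ℕ) (t : ℕ) : ℕ :=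
  ∑ i ∈ range t, (T i + i + j).choose (i + j + 1)

theorem macaulaySum_succ (j : ℕ) (T : ℕ → ℕ) (t : ℕ) :
    macaulaySum j T (t + 1) = macaulaySum j T t + (T t + t + j).choose (t + j + 1) :=
  sum_range_succ _ _

theorem macaulaySum_zero_succ (T : ℕ → ℕ) (t : ℕ) :
    macaulaySum 0 T (t + 1) = T 0 + macaulaySum 1 (fun i => T (i + 1)) t := by
  rw [macaulaySum, sum_range_succ', add_comm]
  congr 1
  exact Nat.choose_one_right _

theorem macaulaySum_congr {j t : ℕ} {T T' : ℕ → ℕ} (h : ∀ i < t, T i = T' i) :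
    macaulaySum j T t = macaulaySum j T' t :=
  sum_congr rfl fun i hs => by rw [h i (mem_range.mp hs)]

theorem macaulaySum_mono {T T' : ℕ → ℕ} (h : T ≤ T') (j t : ℕ) :
    macaulaySum j T t ≤ macaulaySum j T' t :=
  sum_le_sum fun i _ => Nat.choose_le_choose _ (by gcongr; exact h i)

theorem macaulaySum_lt_choose {T : ℕ → ℕ} (hT : Monotone T) (j t : ℕ) :
    macaulaySum j T t < (T t + t + j).choose (t + j) := by
  induction t with
  | zero => exact Nat.choose_pos (by omega)
  | succ t ih =>
    have hle : T t ≤ T (t + 1) := hT t.le_succ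
    calc macaulaySum j T (t + 1)
        < (T t + t + j + 1).choose (t + j + 1) := by
          rw [macaulaySum_succ, Nat.choose_succ_succ']
          gcongr
      _ ≤ (T (t + 1) + (t + 1) + j).choose (t + j + 1) := Nat.choose_le_choose _ (by omega)
      _ = (T (t + 1) + (t + 1) + j).choose (t + 1 + j) := by rw [add_right_comm t]

theorem macaulaySum_succ_lt_succ_of_lt {j t : ℕ} {T T' : ℕ → ℕ} (hT : Monotone T)
    (h : T t < T' t) : macaulaySum j T (t + 1) < macaulaySum j T' (t + 1) :=
  calc macaulaySum j T (t + 1)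
      < (T t + t + j + 1).choose (t + j + 1) := by
        rw [macaulaySum_succ, Nat.choose_succ_succ']
        gcongr
        exact macaulaySum_lt_choose hT j t
    _ ≤ (T' t + t + j).choose (t + j + 1) := Nat.choose_le_choose _ (by omega)
    _ ≤ macaulaySum j T' (t + 1) := by
        rw [macaulaySum_succ]
        exact Nat.le_add_left _ _

theorem macaulaySum_succ_lt_succ_iff {j t : ℕ} {T T' : ℕ → ℕ} (hT : Monotone T)
    (hT' : Monotone T') :
    macaulaySum j T (t + 1) < macaulaySum j T' (t + 1) ↔
      T t < T' t ∨ T t = T' t ∧ macaulaySum j T t < macaulaySum j T' t := by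
  obtain h | h | h := lt_trichotomy (T t) (T' t)
  · simp only [macaulaySum_succ_lt_succ_of_lt hT h, h, true_or]
  · simp only [macaulaySum_succ, h, lt_irrefl, add_lt_add_iff_right, true_and, false_or]
  · simp only [(macaulaySum_succ_lt_succ_of_lt hT' h).not_gt, h.not_gt, h.ne', false_and, or_self]

theorem macaulaySum_lt_macaulaySum_iff {T T' : ℕ → ℕ} (hT : Monotone T) (hT' : Monotone T')
    (j t : ℕ) : macaulaySum j T t < macaulaySum j T' t ↔
      macaulaySum 0 T t < macaulaySum 0 T' t := by
  induction t with
  | zero => rfl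
  | succ t ih => rw [macaulaySum_succ_lt_succ_iff hT hT', macaulaySum_succ_lt_succ_iff hT hT', ih]

theorem eq_of_macaulaySum_eq {j t : ℕ} {T T' : ℕ → ℕ} (hT : Monotone T) (hT' : Monotone T')
    (h : macaulaySum j T t = macaulaySum j T' t) : ∀ i < t, T i = T' i := by
  induction t with
  | zero => simp
  | succ t ih =>
    have heq : T t = T' t := le_antisymm
      (not_lt.mp fun hlt => (macaulaySum_succ_lt_succ_of_lt hT' hlt).ne' h)
      (not_lt.mp fun hlt => (macaulaySum_succ_lt_succ_of_lt hT hlt).ne h)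
    rw [macaulaySum_succ, macaulaySum_succ, heq, Nat.add_right_cancel_iff] at h
    exact Nat.forall_lt_succ_right.mpr ⟨ih h, heq⟩

theorem exists_macaulaySum_eq_of_lt_choose {t M a : ℕ} (ha : a < (M + t).choose t) :
    ∃ T, Monotone T ∧ (∀ i ≥ t, T i = M) ∧ macaulaySum 0 T t = a := by
  induction t generalizing M a with
  | zero =>
    rw [Nat.choose_zero_right, Nat.lt_one_iff] at ha
    exact ⟨fun _ => M, monotone_const, fun _ _ => rfl, ha.symm⟩
  | succ t iht =>
    induction M generalizing a with
    | zero =>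
      obtain rfl : a = 0 := by simpa using ha
      exact ⟨fun _ => 0, monotone_const, fun _ _ => rfl, by simp [macaulaySum]⟩
    | succ M ihM =>
      obtain hlt | hle := lt_or_ge a ((M + (t + 1)).choose (t + 1))
      · obtain ⟨T, hT, hTM, rfl⟩ := ihM hlt
        have hle (i : ℕ) : T i ≤ M :=
          (hT (le_max_left i (t + 1))).trans (hTM _ (le_max_right i (t + 1))).le
        refine ⟨fun i => if i < t + 1 then T i else M + 1, fun r i hrs => ?_,
          fun i hs => if_neg hs.not_gt, macaulaySum_congr fun i hs => if_pos hs⟩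
        have := hT hrs
        have := hle r
        dsimp only
        split_ifs <;> omega
      · rw [show M + 1 + (t + 1) = M + (t + 1) + 1 by ring, Nat.choose_succ_succ'] at ha
        obtain ⟨b, rfl⟩ := Nat.exists_eq_add_of_le hle
        obtain ⟨T, hT, hTM, rfl⟩ := iht (M := M + 1) (a := b)
          (by rw [show M + 1 + t = M + (t + 1) by ring]; omega)
        refine ⟨T, hT, fun i hs => hTM i (by omega), ?_⟩
        rw [macaulaySum_succ, hTM t le_rfl, add_comm (macaulaySum 0 T t), add_zero, add_zero,
          show M + 1 + t = M + (t + 1) by ring]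

theorem exists_macaulaySum_eq (t a : ℕ) : ∃ T, Monotone T ∧ macaulaySum 0 T (t + 1) = a := by
  have ha : a < (a + (t + 1)).choose (t + 1) := by
    induction t with
    | zero => simp
    | succ t ih =>
      rw [← add_assoc, Nat.choose_succ_succ']
      omega
  obtain ⟨T, hT, -, hTa⟩ := exists_macaulaySum_eq_of_lt_choose ha
  exact ⟨T, hT, hTa⟩

theorem macaulaySum_one_eq_add (T : ℕ → ℕ) (t : ℕ) :
    macaulaySum 1 T t = macaulaySum 0 T t + macaulaySum 1 (fun i => T i - 1) t := by
  rw [macaulaySum, macaulaySum, macaulaySum, ← sum_add_distrib]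
  refine sum_congr rfl fun i _ => ?_
  rw [add_zero, add_zero, Nat.choose_succ_succ', Nat.add_left_cancel_iff]
  obtain h | h := Nat.eq_zero_or_pos (T i)
  · rw [h, Nat.choose_eq_zero_of_lt (by omega), Nat.choose_eq_zero_of_lt (by omega)]
  · rw [show T i - 1 + i + 1 = T i + i by omega]

theorem macaulaySum_zero_eq_add (T : ℕ → ℕ) (t : ℕ) :
    macaulaySum 0 T (t + 1) = macaulaySum 0 (fun i => T i - 1) (t + 1) +
      (macaulaySum 0 (fun i => T (i + 1)) t + (T 0 - (T 0 - 1))) := by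
  rw [macaulaySum_zero_succ, macaulaySum_zero_succ, macaulaySum_one_eq_add]
  omega

theorem macUp_zero_right (t : ℕ) : macUp t 0 = 0 := by
  cases t <;> rw [macUp]

theorem macUp_choose_add {t c r : ℕ} (hr : r < c.choose t) :
    macUp (t + 1) (c.choose (t + 1) + r) = (c + 1).choose (t + 2) + macUp t r := by
  rcases ha : c.choose (t + 1) + r with _ | a
  · obtain ⟨hc, rfl⟩ := Nat.add_eq_zero_iff.mp ha
    have hct : c < t + 1 := Nat.choose_eq_zero_iff.mp hc
    rw [macUp_zero_right, macUp_zero_right, Nat.choose_eq_zero_of_lt (by omega)]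
  · have hgreatest : IsGreatest {b | b.choose (t + 1) ≤ a + 1} c := by
      refine ⟨ha ▸ Nat.le_add_right _ _, fun b hb => not_lt.mp fun hcb => ?_⟩
      have hle : (c + 1).choose (t + 1) ≤ b.choose (t + 1) := Nat.choose_le_choose _ hcb
      rw [Nat.choose_succ_succ'] at hle
      exact (hle.trans hb).not_gt (by omega)
    rw [macUp, hgreatest.csSup_eq, ← ha, Nat.add_sub_cancel_left]

theorem macUp_choose {t c : ℕ} (h : t ≤ c) :
    macUp (t + 1) (c.choose (t + 1)) = (c + 1).choose (t + 2) := by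
  simpa only [add_zero, macUp_zero_right] using macUp_choose_add (Nat.choose_pos h)

theorem macUp_macaulaySum {T : ℕ → ℕ} (hT : Monotone T) (t : ℕ) :
    macUp t (macaulaySum 0 T t) = macaulaySum 1 T t := by
  induction t with
  | zero => exact macUp_zero_right 0
  | succ t ih =>
    rw [macaulaySum_succ, macaulaySum_succ, add_comm (macaulaySum 0 T t),
      add_comm (macaulaySum 1 T t), ← ih]
    exact macUp_choose_add (macaulaySum_lt_choose hT 0 t)

theorem macUp_strictMono (t : ℕ) : StrictMono (macUp (t + 1)) := by
  intro a b hab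
  obtain ⟨T, hT, rfl⟩ := exists_macaulaySum_eq t a
  obtain ⟨T', hT', rfl⟩ := exists_macaulaySum_eq t b
  rw [macUp_macaulaySum hT, macUp_macaulaySum hT']
  exact (macaulaySum_lt_macaulaySum_iff hT hT' 1 (t + 1)).mpr hab

/-- The inequality `a ≤ s^{⟨t⟩}` of Macaulay's theorem. For `t = 0` the role of `s^{⟨0⟩}` is played
by `0` if `s = 0` and by `∞` otherwise, whereas `macUp 0 s = 0`. -/
def MacaulayGrowth : ℕ → ℕ → ℕ → Prop
  | 0, s, a => s = 0 → a = 0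
  | t + 1, s, a => a ≤ macUp (t + 1) s

namespace MacaulayGrowth

theorem mono_left {t s s' a : ℕ} (h : MacaulayGrowth t s a) (hs : s ≤ s') :
    MacaulayGrowth t s' a :=
  match t with
  | 0 => fun hs' => h (by omega)
  | t + 1 => le_trans h ((macUp_strictMono t).monotone hs)

theorem zero_left_iff {t a : ℕ} : MacaulayGrowth t 0 a ↔ a = 0 := by
  cases t with
  | zero => simp [MacaulayGrowth]
  | succ t => rw [MacaulayGrowth, macUp_zero_right, Nat.le_zero]

theorem le_macaulaySum_one {t s a : ℕ} {T : ℕ → ℕ} (h : MacaulayGrowth t s a) (hT : Monotone T)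
    (hs : s ≤ macaulaySum 0 T t) : a ≤ macaulaySum 1 T t := by
  cases t with
  | zero => exact (h (Nat.le_zero.mp hs)).le
  | succ t => exact le_trans (h.mono_left hs) (macUp_macaulaySum hT (t + 1)).le

theorem lt_macaulaySum_one {t s a : ℕ} {T : ℕ → ℕ} (h : MacaulayGrowth t s a) (hT : Monotone T)
    (hs : s < macaulaySum 0 T t) : a < macaulaySum 1 T t := by
  cases t with
  | zero => exact absurd hs (Nat.not_lt_zero s)
  | succ t =>
    rw [← macUp_macaulaySum hT]
    exact lt_of_le_of_lt h (macUp_strictMono t hs)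

theorem macaulaySum_le_add {t s : ℕ} {T : ℕ → ℕ}
    (h : MacaulayGrowth t s (macaulaySum 0 T (t + 1))) (hT : Monotone T) :
    macaulaySum 0 T (t + 1) ≤ macaulaySum 0 (fun i => T i - 1) (t + 1) + s := by
  have hT' : Monotone fun i => T (i + 1) := fun _ _ hrs => hT (Nat.succ_le_succ hrs)
  rw [macaulaySum_zero_succ] at h
  rw [macaulaySum_zero_eq_add]
  gcongr
  obtain h0 | h0 := Nat.eq_zero_or_pos (T 0)
  · have := mt (h.lt_macaulaySum_one hT') (by omega)
    omega
  · have := mt (h.le_macaulaySum_one hT') (by omega)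
    omega

/-- With `a_{⟨t⟩}` obtained by lowering the upper entries in the Macaulay representation of `a` by
one, `a - s ≤ a_{⟨t+1⟩}` and `a + (a_{⟨t+1⟩})^{⟨t+1⟩} = a^{⟨t+1⟩}`. -/
theorem add_macUp_sub_le {t s a : ℕ} (h : MacaulayGrowth t s a) :
    a + macUp (t + 1) (a - s) ≤ macUp (t + 1) a := by
  obtain ⟨T, hT, rfl⟩ := exists_macaulaySum_eq t a
  have hT' : Monotone fun i => T i - 1 := fun _ _ hrs => Nat.sub_le_sub_right (hT hrs) 1
  calc macaulaySum 0 T (t + 1) + macUp (t + 1) (macaulaySum 0 T (t + 1) - s)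
      ≤ macaulaySum 0 T (t + 1) + macUp (t + 1) (macaulaySum 0 (fun i => T i - 1) (t + 1)) := by
        gcongr
        exact (macUp_strictMono t).monotone (Nat.sub_le_iff_le_add.mpr (h.macaulaySum_le_add hT))
    _ = macUp (t + 1) (macaulaySum 0 T (t + 1)) := by
        rw [macUp_macaulaySum hT, macUp_macaulaySum hT', ← macaulaySum_one_eq_add]

end MacaulayGrowth

end Macaulay

/-! ### Monomials and their largest variables -/

theorem mdeg_eq_degree (u : Mono n) : mdeg u = u.degree := rfl

theorem mdeg_add_single (u : Mono n) (i : Fin n) : mdeg (u + Finsupp.single i 1) = mdeg u + 1 := by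
  rw [mdeg_eq_degree, map_add, Finsupp.degree_single, mdeg_eq_degree]

theorem eq_of_le_of_mdeg_eq {u v : Mono n} (h : u ≤ v) (hdeg : mdeg u = mdeg v) : u = v := by
  obtain ⟨w, rfl⟩ := exists_add_of_le h
  rw [mdeg_eq_degree, mdeg_eq_degree, map_add, left_eq_add, Finsupp.degree_eq_zero_iff] at hdeg
  rw [hdeg, add_zero]

theorem maxVar_le_iff {u : Mono n} {k : ℕ} : maxVar u ≤ k ↔ ∀ i : Fin n, k ≤ i → u i = 0 := by
  simp only [maxVar, Finset.sup_le_iff, Finsupp.mem_support_iff, Nat.succ_le_iff]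
  exact forall_congr' fun i => not_imp_comm.trans (by rw [not_lt])

theorem maxVar_le (u : Mono n) : maxVar u ≤ n :=
  maxVar_le_iff.mpr fun i hi => absurd i.2 hi.not_gt

theorem maxVar_add (u v : Mono n) : maxVar (u + v) = max (maxVar u) (maxVar v) :=
  eq_of_forall_ge_iff fun k => by
    simp only [max_le_iff, maxVar_le_iff, Finsupp.add_apply, add_eq_zero, forall_and]

theorem maxVar_add_single (u : Mono n) (i : Fin n) :
    maxVar (u + Finsupp.single i 1) = max (maxVar u) (i + 1) := by
  rw [maxVar_add, maxVar, maxVar, Finsupp.support_single i one_ne_zero, Finset.sup_singleton]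

theorem exists_eq_add_single_of_maxVar_eq {u : Mono n} {k : Fin n} (h : maxVar u = k + 1) :
    ∃ v, u = v + Finsupp.single k 1 := by
  have hk : u k ≠ 0 := fun h0 => by
    have hle : maxVar u ≤ k := maxVar_le_iff.mpr fun i hi => by
      obtain rfl | hlt := eq_or_lt_of_le (Fin.le_def.mpr hi)
      · exact h0
      · exact maxVar_le_iff.mp h.le i hlt
    omega
  obtain ⟨v, rfl⟩ := exists_add_of_le (Finsupp.single_le_iff.mpr (Nat.one_le_iff_ne_zero.mpr hk))
  exact ⟨v, add_comm _ _⟩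

theorem exists_maxVar_eq_succ {u : Mono n} (h : maxVar u ≠ 0) : ∃ k : Fin n, maxVar u = k + 1 :=
  ⟨⟨maxVar u - 1, by have := maxVar_le u; omega⟩, by dsimp only; omega⟩

theorem mdeg_eq_zero_of_maxVar_eq_zero {u : Mono n} (h : maxVar u = 0) : mdeg u = 0 := by
  rw [mdeg_eq_degree, Finsupp.degree_eq_zero_iff]
  ext i
  exact maxVar_le_iff.mp h.le i i.val.zero_le

/-! ### Macaulay growth of strongly stable sets -/

section Growth

open Finset

theorem sstableSet_of_succ {V : Set (Mono n)}
    (h : ∀ (u : Mono n) (p q : Fin n), (q : ℕ) = p + 1 → u + Finsupp.single q 1 ∈ V →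
      u + Finsupp.single p 1 ∈ V) : SStableSet V := by
  suffices hdesc : ∀ (u : Mono n) (m p : ℕ) (hmp : m + p < n),
      u + Finsupp.single ⟨m + p, hmp⟩ 1 ∈ V → u + Finsupp.single ⟨p, by omega⟩ 1 ∈ V by
    intro u p q hpq hu
    refine hdesc u (q - p) p (by omega) ?_
    rwa [show (⟨q - p + p, _⟩ : Fin n) = q from Fin.ext (Nat.sub_add_cancel hpq.le)]
  intro u m p hmp hu
  induction m with
  | zero => simpa only [zero_add] using hu
  | succ m ih =>
    exact ih (by omega) (h u ⟨m + p, by omega⟩ ⟨m + 1 + p, hmp⟩ (Nat.add_right_comm m 1 p) hu)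

/-- The set `Dk V k` of a finite set `V` of monomials, as a finite set. -/
noncomputable def dkFinset (V : Finset (Mono n)) (k : Fin n) : Finset (Mono n) :=
  {u ∈ V | maxVar u = k + 1}.preimage (· + Finsupp.single k 1) (add_left_injective _).injOn

theorem mem_dkFinset {V : Finset (Mono n)} {k : Fin n} {w : Mono n} :
    w ∈ dkFinset V k ↔ w + Finsupp.single k 1 ∈ V ∧ maxVar w ≤ k + 1 := by
  rw [dkFinset, mem_preimage, mem_filter, maxVar_add_single, max_eq_right_iff]

theorem card_dkFinset (V : Finset (Mono n)) (k : Fin n) :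
    #(dkFinset V k) = #{u ∈ V | maxVar u = k + 1} := by
  classical
  rw [dkFinset, card_preimage, filter_true_of_mem]
  intro u hu
  obtain ⟨v, rfl⟩ := exists_eq_add_single_of_maxVar_eq (mem_filter.mp hu).2
  exact ⟨v, rfl⟩

theorem card_filter_maxVar_le_succ (V : Finset (Mono n)) (k : ℕ) :
    #{u ∈ V | maxVar u ≤ k + 1} = #{u ∈ V | maxVar u ≤ k} + #{u ∈ V | maxVar u = k + 1} := by
  rw [← card_union_of_disjoint, ← filter_or]
  · simp only [Nat.le_succ_iff]
  · exact disjoint_filter.mpr fun u _ hle heq => by omega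

theorem sstableSet_dkFinset {V : Finset (Mono n)} (hV : SStableSet (V : Set (Mono n)))
    (k : Fin n) : SStableSet (dkFinset V k : Set (Mono n)) := by
  intro u p q hpq hu
  rw [mem_coe, mem_dkFinset, add_right_comm, maxVar_add_single] at hu ⊢
  rw [Fin.lt_def] at hpq
  exact ⟨hV _ p q hpq hu.1, by omega⟩

namespace SStableSet

variable {V : Finset (Mono n)} {k : ℕ}

theorem card_filter_dkFinset_le (hV : SStableSet (V : Set (Mono n))) (hk : k + 1 < n) :
    #{w ∈ dkFinset V ⟨k + 1, hk⟩ | maxVar w ≤ k + 1} ≤ #{u ∈ V | maxVar u = k + 1} := by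
  refine card_le_card_of_injOn (· + Finsupp.single ⟨k, k.lt_succ_self.trans hk⟩ 1) (fun w hw => ?_)
    (add_left_injective _).injOn
  rw [mem_coe, mem_filter, mem_dkFinset] at hw
  rw [mem_coe, mem_filter, maxVar_add_single]
  exact ⟨hV w _ _ (Fin.mk_lt_mk.mpr k.lt_succ_self) hw.1.1, max_eq_right hw.2⟩

theorem macaulayGrowth_maxVar_eq_of_dkFinset (hV : SStableSet (V : Set (Mono n))) (hk : k + 1 < n)
    (h : MacaulayGrowth k #{w ∈ dkFinset V ⟨k + 1, hk⟩ | maxVar w ≤ k + 1}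
      #{w ∈ dkFinset V ⟨k + 1, hk⟩ | maxVar w ≤ k + 2}) :
    MacaulayGrowth k #{u ∈ V | maxVar u = k + 1} #{u ∈ V | maxVar u = k + 2} := by
  rw [filter_true_of_mem (p := (maxVar · ≤ k + 2)) fun w hw => (mem_dkFinset.mp hw).2,
    card_dkFinset] at h
  exact h.mono_left (hV.card_filter_dkFinset_le hk)

theorem macaulayGrowth_maxVar_le_of_mdeg_lt (hV : SStableSet (V : Set (Mono n))) (hk : k + 1 < n)
    {e : ℕ} (he : ∀ u ∈ V, mdeg u < e) :
    MacaulayGrowth k #{u ∈ V | maxVar u ≤ k + 1} #{u ∈ V | maxVar u ≤ k + 2} := by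
  induction e generalizing V k with
  | zero =>
    obtain rfl : V = ∅ := eq_empty_of_forall_notMem fun u hu => Nat.not_lt_zero _ (he u hu)
    exact MacaulayGrowth.zero_left_iff.mpr rfl
  | succ e ihe =>
    have hgrowth (k : ℕ) (hk : k + 1 < n) :
        MacaulayGrowth k #{u ∈ V | maxVar u = k + 1} #{u ∈ V | maxVar u = k + 2} := by
      refine hV.macaulayGrowth_maxVar_eq_of_dkFinset hk
        (ihe (sstableSet_dkFinset hV _) hk fun w hw => ?_)
      have hlt := he _ (mem_dkFinset.mp hw).1
      rwa [mdeg_add_single, add_lt_add_iff_right] at hlt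
    induction k with
    | zero =>
      intro h0
      rw [card_filter_maxVar_le_succ] at h0 ⊢
      rw [card_filter_maxVar_le_succ, hgrowth 0 hk (by omega)]
      omega
    | succ k ihk =>
      have heq : #{u ∈ V | maxVar u = k + 2} =
          #{u ∈ V | maxVar u ≤ k + 2} - #{u ∈ V | maxVar u ≤ k + 1} := by
        rw [card_filter_maxVar_le_succ V (k + 1), Nat.add_sub_cancel_left]
      calc #{u ∈ V | maxVar u ≤ k + 3}
          = #{u ∈ V | maxVar u ≤ k + 2} + #{u ∈ V | maxVar u = k + 3} :=
            card_filter_maxVar_le_succ V (k + 2)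
        _ ≤ #{u ∈ V | maxVar u ≤ k + 2} + macUp (k + 1) #{u ∈ V | maxVar u = k + 2} := by
            gcongr
            exact hgrowth (k + 1) hk
        _ ≤ macUp (k + 1) #{u ∈ V | maxVar u ≤ k + 2} := by
            rw [heq]
            exact (ihk (by omega)).add_macUp_sub_le

theorem macaulayGrowth_maxVar_eq (hV : SStableSet (V : Set (Mono n))) (hk : k + 1 < n) :
    MacaulayGrowth k #{u ∈ V | maxVar u = k + 1} #{u ∈ V | maxVar u = k + 2} :=
  hV.macaulayGrowth_maxVar_eq_of_dkFinset hk <|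
    (sstableSet_dkFinset hV _).macaulayGrowth_maxVar_le_of_mdeg_lt hk fun _ hw =>
      Nat.lt_succ_of_le (le_sup (f := mdeg) hw)

end SStableSet

end Growth

/-! ### Lexicographic segments -/

section LexSegment

open Finset

/-- The degree of a monomial in the variables `x_j, x_{j+1}, …` (counted from `x_0`). -/
def tailDeg (u : Mono n) (j : ℕ) : ℕ := ∑ i : Fin n with j ≤ i.val, u i

theorem tailDeg_zero (u : Mono n) : tailDeg u 0 = mdeg u := by
  rw [mdeg_eq_degree, Finsupp.degree_eq_sum, tailDeg, filter_true_of_mem fun i _ => i.val.zero_le]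

theorem tailDeg_eq_zero_iff {u : Mono n} {j : ℕ} : tailDeg u j = 0 ↔ maxVar u ≤ j := by
  simp only [tailDeg, sum_eq_zero_iff, mem_filter_univ, maxVar_le_iff]

theorem tailDeg_add_single (u : Mono n) (i : Fin n) (j : ℕ) :
    tailDeg (u + Finsupp.single i 1) j = tailDeg u j + if j ≤ i then 1 else 0 := by
  simp only [tailDeg, Finsupp.add_apply, sum_add_distrib, Finsupp.single_apply, sum_ite_eq,
    mem_filter_univ]

theorem tailDeg_antitone (u : Mono n) : Antitone (tailDeg u) := fun _ _ hab =>
  sum_le_sum_of_subset (monotone_filter_right univ fun _ _ => hab.trans)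

theorem tailDeg_eq_add (u : Mono n) (i : Fin n) : tailDeg u i = u i + tailDeg u (i + 1) := by
  have hinsert : filter (fun k : Fin n => i.val ≤ k.val) univ =
      insert i (filter (fun k : Fin n => i.val + 1 ≤ k.val) univ) := by
    ext k
    simp only [mem_insert, mem_filter_univ, Fin.ext_iff]
    omega
  rw [tailDeg, hinsert, sum_insert (by simp), tailDeg]

theorem tailDeg_injective : Function.Injective (tailDeg : Mono n → ℕ → ℕ) := fun u v h => by
  ext i
  have hu := tailDeg_eq_add u i
  rw [h, tailDeg_eq_add v i] at hu
  exact (Nat.add_right_cancel hu).symm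

theorem exists_tailDeg_eq {g : ℕ → ℕ} (hg : Antitone g) (hgn : g n = 0) :
    ∃ u : Mono n, ∀ j, tailDeg u j = g j := by
  obtain ⟨u, hu⟩ : ∃ u : Mono n, ∀ i : Fin n, u i = g i - g (i + 1) :=
    ⟨Finsupp.equivFunOnFinite.symm fun i => g i - g (i + 1), fun _ => rfl⟩
  refine ⟨u, fun j => ?_⟩
  obtain hj | hj := le_total n j
  · rw [tailDeg_eq_zero_iff.mpr ((maxVar_le u).trans hj)]
    exact (Nat.le_zero.mp (hgn ▸ hg hj)).symm
  · induction hj using Nat.decreasingInduction with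
    | self => rw [hgn, tailDeg_eq_zero_iff.mpr (maxVar_le u)]
    | of_succ j hj ih =>
      rw [tailDeg_eq_add u ⟨j, hj⟩, hu, ih]
      exact Nat.sub_add_cancel (hg j.le_succ)

/-- The number of monomials in `x_0, …, x_k` that have the same degree as `w` and are
lexicographically larger than `w`, for a monomial `w` in these variables: the `i`-th term counts
those whose exponents first differ from those of `w` at `x_{k-1-i}`. -/
def lexRank (k : ℕ) (w : Mono n) : ℕ := macaulaySum 0 (fun i => tailDeg w (k - i)) k

theorem monotone_tailDeg_sub (w : Mono n) (k : ℕ) : Monotone fun i => tailDeg w (k - i) :=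
  (tailDeg_antitone w).comp fun _ _ hab => Nat.sub_le_sub_left hab k

theorem lexRank_succ {k : ℕ} {w : Mono n} (hw : maxVar w ≤ k + 1) :
    lexRank (k + 1) w = macaulaySum 1 (fun i => tailDeg w (k - i)) k := by
  rw [lexRank, macaulaySum_zero_succ, Nat.sub_zero, tailDeg_eq_zero_iff.mpr hw, zero_add]
  simp only [Nat.add_sub_add_right]

theorem lexRank_add_single_mono (k : ℕ) (w : Mono n) {p q : Fin n} (hpq : p ≤ q) :
    lexRank k (w + Finsupp.single p 1) ≤ lexRank k (w + Finsupp.single q 1) := by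
  refine macaulaySum_mono (fun i => ?_) 0 k
  rw [tailDeg_add_single, tailDeg_add_single]
  rw [Fin.le_def] at hpq
  dsimp only
  split_ifs <;> omega

theorem lexRank_lt_choose (k : ℕ) (w : Mono n) : lexRank k w < (mdeg w + k).choose k := by
  simpa only [lexRank, Nat.sub_self, tailDeg_zero, add_zero] using
    macaulaySum_lt_choose (monotone_tailDeg_sub w k) 0 k

theorem eq_of_lexRank_eq {k : ℕ} {u v : Mono n} (hu : maxVar u ≤ k + 1) (hv : maxVar v ≤ k + 1)
    (hdeg : mdeg u = mdeg v) (h : lexRank k u = lexRank k v) : u = v := by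
  refine tailDeg_injective (funext fun j => ?_)
  obtain rfl | hj0 := Nat.eq_zero_or_pos j
  · rw [tailDeg_zero, tailDeg_zero, hdeg]
  obtain hj | hj := le_or_gt j k
  · simpa only [Nat.sub_sub_self hj] using
      eq_of_macaulaySum_eq (monotone_tailDeg_sub u k) (monotone_tailDeg_sub v k) h (k - j)
        (by omega)
  · rw [tailDeg_eq_zero_iff.mpr (hu.trans hj), tailDeg_eq_zero_iff.mpr (hv.trans hj)]

theorem exists_lexRank_eq {k : Fin n} {e m : ℕ} (hm : m < (e + k).choose k) :
    ∃ w : Mono n, mdeg w = e ∧ maxVar w ≤ k + 1 ∧ lexRank k w = m := by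
  obtain ⟨T, hT, hTe, rfl⟩ := exists_macaulaySum_eq_of_lt_choose hm
  have hanti : Antitone fun j => if j ≤ (k : ℕ) then T (k - j) else 0 := fun a b hab => by
    have := hT (Nat.sub_le_sub_left hab k)
    dsimp only
    split_ifs <;> omega
  obtain ⟨w, hw⟩ := exists_tailDeg_eq (n := n) hanti (if_neg k.2.not_ge)
  refine ⟨w, ?_, ?_, macaulaySum_congr fun i hi => ?_⟩
  · rw [← tailDeg_zero, hw, if_pos (Nat.zero_le _), Nat.sub_zero, hTe _ le_rfl]
  · rw [← tailDeg_eq_zero_iff, hw, if_neg (by omega)]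
  · rw [hw, if_pos (Nat.sub_le _ _), Nat.sub_sub_self hi.le]

theorem bijOn_lexRank (k : Fin n) (e : ℕ) :
    Set.BijOn (lexRank k) {w : Mono n | mdeg w = e ∧ maxVar w ≤ k + 1}
      (Set.Iio ((e + k).choose k)) := by
  refine ⟨?_, fun u hu v hv => eq_of_lexRank_eq hu.2 hv.2 (hu.1.trans hv.1.symm), fun m hm => ?_⟩
  · rintro w ⟨rfl, -⟩
    exact lexRank_lt_choose k w
  · obtain ⟨w, hdeg, hmax, rfl⟩ := exists_lexRank_eq (Set.mem_Iio.mp hm)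
    exact ⟨w, ⟨hdeg, hmax⟩, rfl⟩

/-- The `m` lexicographically largest monomials of degree `e` in the variables `x_0, …, x_k`. -/
noncomputable def lexSeg (e k m : ℕ) : Finset (Mono n) :=
  {w ∈ finsuppAntidiag univ e | maxVar w ≤ k + 1 ∧ lexRank k w < m}

theorem mem_lexSeg {e k m : ℕ} {w : Mono n} :
    w ∈ lexSeg e k m ↔ mdeg w = e ∧ maxVar w ≤ k + 1 ∧ lexRank k w < m := by
  rw [lexSeg, mem_filter, mem_finsuppAntidiag, mdeg_eq_degree, Finsupp.degree_eq_sum]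
  simp

theorem card_lexSeg {k : Fin n} {e m : ℕ} (hm : m ≤ (e + k).choose k) :
    #(lexSeg (n := n) e k m) = m := by
  have hbij : Set.BijOn (lexRank (n := n) k) (lexSeg (n := n) e k m) (range m) := by
    convert (bijOn_lexRank k e).inter_mapsTo (Set.mapsTo_preimage _ (Set.Iio m))
      Set.inter_subset_right using 1
    · ext w
      rw [mem_coe, mem_lexSeg, ← and_assoc]
      rfl
    · rw [coe_range, Set.Iio_inter_Iio, min_eq_right hm]
  rw [card_nbij _ hbij.mapsTo hbij.injOn hbij.surjOn, card_range]

theorem sstableSet_lexSeg (e k m : ℕ) : SStableSet (lexSeg (n := n) e k m : Set (Mono n)) := by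
  intro u p q hpq hu
  rw [mem_coe, mem_lexSeg, mdeg_add_single, maxVar_add_single] at hu ⊢
  refine ⟨hu.1, ?_, (lexRank_add_single_mono k u hpq.le).trans_lt hu.2.2⟩
  rw [Fin.lt_def] at hpq
  omega

theorem MacaulayGrowth.mem_lexSeg_of_mem_lexSeg_succ {e k m m' : ℕ} {w : Mono n}
    (h : MacaulayGrowth k m m') (hw : maxVar w ≤ k + 1) (hmem : w ∈ lexSeg e (k + 1) m') :
    w ∈ lexSeg e k m := by
  rw [mem_lexSeg] at hmem ⊢
  refine ⟨hmem.1, hw, not_le.mp fun hle => hmem.2.2.not_ge ?_⟩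
  rw [lexRank_succ hw]
  exact h.le_macaulaySum_one (monotone_tailDeg_sub w k) hle

end LexSegment

/-! ### Linear lexsegment sets and M-vectors -/

section MVector

open Finset

theorem card_filter_maxVar_eq_le_choose {V : Finset (Mono n)} {e : ℕ}
    (hdeg : ∀ u ∈ V, mdeg u = e + 1) (k : Fin n) :
    #{u ∈ V | maxVar u = k + 1} ≤ (e + k).choose k := by
  have hsub : (dkFinset V k : Set (Mono n)) ⊆ {w | mdeg w = e ∧ maxVar w ≤ k + 1} := fun w hw => by
    rw [mem_coe, mem_dkFinset] at hw
    have hw' := hdeg _ hw.1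
    rw [mdeg_add_single, Nat.add_right_cancel_iff] at hw'
    exact ⟨hw', hw.2⟩
  have hrank := bijOn_lexRank k e
  rw [← card_dkFinset, ← card_range ((e + k).choose k)]
  exact card_le_card_of_injOn (lexRank k)
    (fun w hw => mem_coe.mpr (mem_range.mpr (hrank.mapsTo (hsub hw)))) (hrank.injOn.mono hsub)

theorem SStableSet.card_filter_maxVar_eq_one_ne_zero {V : Finset (Mono n)}
    (hV : SStableSet (V : Set (Mono n))) (hne : V.Nonempty) (hdeg : ∀ u ∈ V, mdeg u ≠ 0) :
    #{u ∈ V | maxVar u = 1} ≠ 0 := by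
  have hdesc (k : ℕ) (hk : k < n) (h : #{u ∈ V | maxVar u = k + 1} ≠ 0) :
      #{u ∈ V | maxVar u = 1} ≠ 0 := by
    induction k with
    | zero => exact h
    | succ k ih =>
      refine ih (by omega) fun h0 => h ?_
      exact MacaulayGrowth.zero_left_iff.mp (h0 ▸ hV.macaulayGrowth_maxVar_eq hk)
  obtain ⟨u, hu⟩ := hne
  obtain ⟨k, hk⟩ := exists_maxVar_eq_succ (mt mdeg_eq_zero_of_maxVar_eq_zero (hdeg u hu))
  exact hdesc k k.2 (card_ne_zero_of_mem (mem_filter.mpr ⟨hu, hk⟩))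

theorem mVector_iff {ℓ : Fin n → ℕ} (hn : 0 < n) :
    MVector ℓ ↔ ℓ ⟨0, hn⟩ = 1 ∧
      ∀ (k : ℕ) (hk : k + 1 < n), MacaulayGrowth k (ℓ ⟨k, k.lt_succ_self.trans hk⟩)
        (ℓ ⟨k + 1, hk⟩) := by
  refine ⟨fun ⟨h0, hgrowth⟩ => ⟨h0 hn, fun k hk => ?_⟩, fun ⟨h0, hgrowth⟩ => ⟨fun _ => h0, ?_⟩⟩
  · cases k with
    | zero => exact fun h => absurd ((h0 hn).symm.trans h) one_ne_zero
    | succ k => exact hgrowth (k + 1) k.succ_pos _ hk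
  · rintro (_ | k) hk _ hk'
    · omega
    · exact hgrowth (k + 1) hk'

theorem SStableSet.mVector {V : Finset (Mono n)} {e : ℕ} (hn : 0 < n)
    (hV : SStableSet (V : Set (Mono n))) (hne : V.Nonempty) (hdeg : ∀ u ∈ V, mdeg u = e + 1) :
    MVector fun k : Fin n => #{u ∈ V | maxVar u = k + 1} := by
  refine (mVector_iff hn).mpr ⟨le_antisymm ?_ ?_, fun k hk => hV.macaulayGrowth_maxVar_eq hk⟩
  · simpa using card_filter_maxVar_eq_le_choose hdeg ⟨0, hn⟩
  · exact Nat.one_le_iff_ne_zero.mpr <| hV.card_filter_maxVar_eq_one_ne_zero hne fun u hu => by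
      rw [hdeg u hu]
      exact e.succ_ne_zero

theorem MVector.le_choose {ℓ : Fin n → ℕ} {e : ℕ} (hℓ : MVector ℓ)
    (h1 : ∀ h2 : 1 < n, ℓ ⟨1, h2⟩ ≤ e + 1) (k : Fin n) : ℓ k ≤ (e + k).choose k := by
  obtain ⟨k, hk⟩ := k
  induction k with
  | zero => simp [hℓ.1 hk]
  | succ k ih =>
    cases k with
    | zero => simpa using h1 hk
    | succ k =>
      calc ℓ ⟨k + 2, hk⟩ ≤ macUp (k + 1) (ℓ ⟨k + 1, by omega⟩) := hℓ.2 (k + 1) k.succ_pos _ hk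
        _ ≤ macUp (k + 1) ((e + (k + 1)).choose (k + 1)) :=
          (macUp_strictMono k).monotone (ih (by omega))
        _ = (e + (k + 2)).choose (k + 2) := macUp_choose (by omega)

/-- The set `V` of monomials of degree `e + 1` for which each `Dk V k` consists of the `ℓ k`
lexicographically largest monomials of degree `e` in `x_0, …, x_k`: the `(e + 1)`-linear lexsegment
set with `ℓ`-sequence `ℓ`. -/
noncomputable def linearLexSet (e : ℕ) (ℓ : Fin n → ℕ) : Finset (Mono n) :=
  open Classical in
  univ.biUnion fun k : Fin n => (lexSeg e k (ℓ k)).map (addRightEmbedding (Finsupp.single k 1))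

theorem mem_linearLexSet {e : ℕ} {ℓ : Fin n → ℕ} {u : Mono n} :
    u ∈ linearLexSet e ℓ ↔ ∃ k : Fin n, ∃ w ∈ lexSeg e k (ℓ k), w + Finsupp.single k 1 = u := by
  simp [linearLexSet]

theorem mdeg_of_mem_linearLexSet {e : ℕ} {ℓ : Fin n → ℕ} {u : Mono n} (hu : u ∈ linearLexSet e ℓ) :
    mdeg u = e + 1 := by
  obtain ⟨k, w, hw, rfl⟩ := mem_linearLexSet.mp hu
  rw [mdeg_add_single, (mem_lexSeg.mp hw).1]

theorem add_single_mem_linearLexSet_iff {e : ℕ} {ℓ : Fin n → ℕ} {k : Fin n} {w : Mono n}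
    (hw : maxVar w ≤ k + 1) :
    w + Finsupp.single k 1 ∈ linearLexSet e ℓ ↔ w ∈ lexSeg e k (ℓ k) := by
  rw [mem_linearLexSet]
  refine ⟨?_, fun h => ⟨k, w, h, rfl⟩⟩
  rintro ⟨j, v, hv, hvw⟩
  have hmax := congrArg maxVar hvw
  rw [maxVar_add_single, maxVar_add_single, max_eq_right (mem_lexSeg.mp hv).2.1,
    max_eq_right hw] at hmax
  obtain rfl : j = k := Fin.ext (Nat.succ_injective hmax)
  rwa [← add_left_injective _ hvw]

theorem card_filter_linearLexSet {e : ℕ} {ℓ : Fin n → ℕ} {k : Fin n}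
    (h : ℓ k ≤ (e + k).choose k) : #{u ∈ linearLexSet e ℓ | maxVar u = k + 1} = ℓ k := by
  have hdk : dkFinset (linearLexSet e ℓ) k = lexSeg e k (ℓ k) := by
    ext w
    rw [mem_dkFinset]
    refine ⟨fun hw => (add_single_mem_linearLexSet_iff hw.2).mp hw.1, fun hw => ?_⟩
    have hmax := (mem_lexSeg.mp hw).2.1
    exact ⟨(add_single_mem_linearLexSet_iff hmax).mpr hw, hmax⟩
  rw [← card_dkFinset, hdk, card_lexSeg h]

theorem sstableSet_linearLexSet {e : ℕ} {ℓ : Fin n → ℕ}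
    (hℓ : ∀ (k : ℕ) (hk : k + 1 < n), MacaulayGrowth k (ℓ ⟨k, k.lt_succ_self.trans hk⟩)
      (ℓ ⟨k + 1, hk⟩)) :
    SStableSet (linearLexSet e ℓ : Set (Mono n)) := by
  refine sstableSet_of_succ fun u p q hpq hu => ?_
  rw [mem_coe] at hu ⊢
  obtain hle | hgt := le_or_gt (maxVar u) q
  · rw [add_single_mem_linearLexSet_iff (hle.trans q.val.le_succ)] at hu
    obtain ⟨q, hq⟩ := q
    obtain rfl : q = p + 1 := hpq
    rw [add_single_mem_linearLexSet_iff hle]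
    exact (hℓ p hq).mem_lexSeg_of_mem_lexSeg_succ hle hu
  · obtain ⟨k, hk⟩ := exists_maxVar_eq_succ (Nat.ne_zero_of_lt hgt)
    obtain ⟨v, rfl⟩ := exists_eq_add_single_of_maxVar_eq hk
    have hv : maxVar v ≤ k + 1 := by rwa [maxVar_add_single, max_eq_right_iff] at hk
    have hmem (i : Fin n) (hi : i ≤ q) :
        v + Finsupp.single k 1 + Finsupp.single i 1 ∈ linearLexSet e ℓ ↔
          v + Finsupp.single i 1 ∈ lexSeg e k (ℓ k) := by
      rw [Fin.le_def] at hi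
      rw [add_right_comm, add_single_mem_linearLexSet_iff]
      rw [maxVar_add_single]
      omega
    have hpq' : p < q := Fin.lt_def.mpr (by omega)
    rw [hmem q le_rfl] at hu
    rw [hmem p hpq'.le]
    exact sstableSet_lexSeg e k _ v p q hpq' hu

theorem exists_sstableSet_card_maxVar_iff {ℓ : Fin n → ℕ} {e : ℕ} (hn : 0 < n) :
    (∃ V : Finset (Mono n), V.Nonempty ∧ SStableSet (V : Set (Mono n)) ∧
      (∀ u ∈ V, mdeg u = e + 1) ∧ ∀ k : Fin n, #{u ∈ V | maxVar u = k + 1} = ℓ k) ↔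
    MVector ℓ ∧ ∀ h2 : 1 < n, ℓ ⟨1, h2⟩ ≤ e + 1 := by
  constructor
  · rintro ⟨V, hne, hV, hdeg, hcard⟩
    obtain rfl : (fun k : Fin n => #{u ∈ V | maxVar u = k + 1}) = ℓ := funext hcard
    exact ⟨hV.mVector hn hne hdeg, fun h2 => by
      simpa using card_filter_maxVar_eq_le_choose hdeg ⟨1, h2⟩⟩
  · rintro ⟨hℓ, h1⟩
    have hcard (k : Fin n) : #{u ∈ linearLexSet e ℓ | maxVar u = k + 1} = ℓ k :=
      card_filter_linearLexSet (hℓ.le_choose h1 k)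
    refine ⟨linearLexSet e ℓ, ?_, sstableSet_linearLexSet ((mVector_iff hn).mp hℓ).2,
      fun u => mdeg_of_mem_linearLexSet, hcard⟩
    refine nonempty_iff_ne_empty.mpr fun hempty => ?_
    have h0 := hcard ⟨0, hn⟩
    rw [hempty, hℓ.1 hn] at h0
    exact zero_ne_one h0

end MVector

/-! ### Strongly stable ideals and their minimal generators -/

theorem monomial_mem_span_iff {σ R : Type*} [CommSemiring R] [Nontrivial R] {V : Set (σ →₀ ℕ)}
    {u : σ →₀ ℕ} :
    monomial u (1 : R) ∈ Ideal.span ((fun v => monomial v (1 : R)) '' V) ↔ ∃ v ∈ V, v ≤ u := by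
  classical
  rw [mem_ideal_span_monomial_image, support_monomial, if_neg one_ne_zero]
  simp only [Finset.mem_singleton, forall_eq]

theorem span_monomial_ne_bot_iff {σ R : Type*} [CommSemiring R] [Nontrivial R]
    {V : Set (σ →₀ ℕ)} :
    Ideal.span ((fun v => monomial v (1 : R)) '' V) ≠ ⊥ ↔ V.Nonempty := by
  simp [Set.Nonempty]

theorem minGen_iff_minimal {I : Ideal (MvPolynomial (Fin n) K)} {u : Mono n} :
    MinGen I u ↔ Minimal (monomial · (1 : K) ∈ I) u := by
  rw [minimal_iff_forall_lt, MinGen]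
  simp only [lt_iff_le_and_ne, and_imp]

theorem exists_minGen_le {I : Ideal (MvPolynomial (Fin n) K)} {u : Mono n}
    (hu : monomial u (1 : K) ∈ I) : ∃ v, MinGen I v ∧ v ≤ u := by
  obtain ⟨v, hvu, hv⟩ := exists_minimal_le_of_wellFoundedLT (monomial · (1 : K) ∈ I) u hu
  exact ⟨v, minGen_iff_minimal.mpr hv, hvu⟩

theorem minGen_span_iff {V : Set (Mono n)} (hV : IsAntichain (· ≤ ·) V) {u : Mono n} :
    MinGen (Ideal.span ((fun v => monomial v (1 : K)) '' V)) u ↔ u ∈ V := by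
  simp only [minGen_iff_minimal, monomial_mem_span_iff]
  exact hV.minimal_mem_upperClosure_iff_mem

theorem sstableIdeal_span {V : Set (Mono n)} (hV : SStableSet V) :
    SStableIdeal (Ideal.span ((fun v => monomial v (1 : K)) '' V)) := by
  refine ⟨fun p hp m hm => ?_, fun u q hq hu p hpq => ?_⟩
  · rw [mem_ideal_span_monomial_image] at hp
    exact monomial_mem_span_iff.mpr (hp m hm)
  obtain ⟨w, rfl⟩ : ∃ w, u = Finsupp.single q 1 + w :=
    exists_add_of_le (Finsupp.single_le_iff.mpr hq)
  rw [add_tsub_cancel_left, monomial_mem_span_iff]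
  obtain ⟨v, hv, hvw⟩ := monomial_mem_span_iff.mp hu
  obtain hvq | hvq : v q = 0 ∨ 1 ≤ v q := Nat.eq_zero_or_pos (v q)
  · refine ⟨v, hv, le_add_right fun i => ?_⟩
    obtain rfl | hiq := eq_or_ne i q
    · exact hvq ▸ Nat.zero_le _
    · simpa [hiq.symm] using hvw i
  · obtain ⟨v, rfl⟩ := exists_add_of_le (Finsupp.single_le_iff.mpr hvq)
    rw [add_comm] at hv
    exact ⟨_, hV v p q hpq hv, add_le_add_left (le_of_add_le_add_left hvw) _⟩

theorem SStableIdeal.sstableSet_minGen {I : Ideal (MvPolynomial (Fin n) K)} {d : ℕ}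
    (hI : SStableIdeal I) (hdeg : ∀ u, MinGen I u → mdeg u = d) : SStableSet {u | MinGen I u} := by
  intro u p q hpq hu
  have hmem := hI.2 _ q (by simp) hu.1 p hpq
  rw [add_tsub_cancel_right] at hmem
  obtain ⟨v, hv, hvu⟩ := exists_minGen_le hmem
  have hvu' : v = u + Finsupp.single p 1 := eq_of_le_of_mdeg_eq hvu <| by
    rw [hdeg v hv, mdeg_add_single, ← mdeg_add_single u q, hdeg _ hu]
  rwa [hvu'] at hv

theorem exists_sstableIdeal_minGen_iff {V : Set (Mono n)} {d : ℕ} (hdeg : ∀ u ∈ V, mdeg u = d) :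
    (∃ I : Ideal (MvPolynomial (Fin n) K), I ≠ ⊥ ∧ SStableIdeal I ∧ ∀ u, u ∈ V ↔ MinGen I u) ↔
      V.Nonempty ∧ SStableSet V := by
  constructor
  · rintro ⟨I, hne, hI, hmin⟩
    obtain rfl : V = {u | MinGen I u} := Set.ext hmin
    refine ⟨?_, hI.sstableSet_minGen hdeg⟩
    obtain ⟨f, hf, hf0⟩ := Submodule.exists_mem_ne_zero_of_ne_bot hne
    obtain ⟨m, hm⟩ := support_nonempty.mpr hf0
    obtain ⟨v, hv, -⟩ := exists_minGen_le (hI.1 f hf m hm)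
    exact ⟨v, hv⟩
  · rintro ⟨hne, hV⟩
    have hanti : IsAntichain (· ≤ ·) V := fun u hu v hv huv hle =>
      huv (eq_of_le_of_mdeg_eq hle ((hdeg u hu).trans (hdeg v hv).symm))
    exact ⟨Ideal.span ((fun v => monomial v (1 : K)) '' V), span_monomial_ne_bot_iff.mpr hne,
      sstableIdeal_span hV, fun u => (minGen_span_iff hanti).symm⟩

/-- characterization of `ℓ`-sequences of nonzero strongly stable ideals
generated in degree `d`: exactly the M-vectors with `ℓ_2 ≤ d`. -/
theorem stmt9 (n d : ℕ) (hn : 0 < n) (hd : 0 < d) (K : Type) [Field K]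
    (ℓ : Fin n → ℕ) :
    (∃ (I : Ideal (MvPolynomial (Fin n) K)) (G : Finset (Mono n)),
        I ≠ ⊥ ∧ SStableIdeal I ∧ (∀ u, u ∈ G ↔ MinGen I u) ∧
        (∀ u ∈ G, mdeg u = d) ∧
        ∀ k : Fin n, (G.filter fun u => maxVar u = (k : ℕ) + 1).card = ℓ k) ↔
    (MVector ℓ ∧ ∀ h2 : 1 < n, ℓ ⟨1, h2⟩ ≤ d) := by
  obtain ⟨e, rfl⟩ := Nat.exists_eq_succ_of_ne_zero hd.ne'
  rw [← exists_sstableSet_card_maxVar_iff hn]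
  constructor
  · rintro ⟨I, G, hI0, hI, hmin, hdeg, hcard⟩
    obtain ⟨hne, hG⟩ := (exists_sstableIdeal_minGen_iff hdeg).mp ⟨I, hI0, hI, hmin⟩
    exact ⟨G, hne, hG, hdeg, hcard⟩
  · rintro ⟨G, hne, hG, hdeg, hcard⟩
    obtain ⟨I, hI0, hI, hmin⟩ := (exists_sstableIdeal_minGen_iff (K := K) hdeg).mpr ⟨hne, hG⟩
    exact ⟨I, G, hI0, hI, hmin, hdeg, hcard⟩

end Paper
end

section
/- Let Γ be an (n-2)-dimensional simplicial complex on the vertex set [n+d-1] and Γ* its Alexander dual. Then Γ is Cohen–Macaulay and shifted if and only if the Stanley–Reisner ideal I_{Γ*} is a squarefree strongly stable ideal generated in degree d. Moreover, in that case the ℓ*-sequence of I_{Γ*} equals the h-vector of Γ: ℓ*_k(I_{Γ*}) = h_{k-1}(Γ) for k = 1,...,n. -/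
set_option synthInstance.maxHeartbeats 1000000
set_option maxHeartbeats 1000000

open MvPolynomial

namespace Paper

/-! ### Ideal-level notions -/

variable {n : ℕ} {K : Type} [Field K]

/-- squarefree exponent vector -/
def SqFree {n : ℕ} (u : Mono n) : Prop := ∀ i, u i ≤ 1

/-- squarefree monomial ideal -/
def SqMonomialIdeal (I : Ideal (MvPolynomial (Fin n) K)) : Prop :=
  MonomialIdeal I ∧ ∀ u : Mono n, MinGen I u → SqFree u

/-- squarefree strongly stable ideal -/
def SqSStableIdeal (I : Ideal (MvPolynomial (Fin n) K)) : Prop :=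
  SqMonomialIdeal I ∧
  ∀ u : Mono n, SqFree u → monomial u (1 : K) ∈ I →
    ∀ p q : Fin n, p < q → u q = 1 → u p = 0 →
      monomial (u - Finsupp.single q 1 + Finsupp.single p 1) (1 : K) ∈ I

/-! ### Simplicial complexes -/

/-- `Γ` is a simplicial complex on the vertex set `Fin m` (given as its finset of faces). -/
def IsComplex {m : ℕ} (Γ : Finset (Finset (Fin m))) : Prop :=
  ∀ F ∈ Γ, ∀ G ⊆ F, G ∈ Γ

/-- the Alexander dual `Γ* = {F : Fᶜ ∉ Γ}` -/
def alexDual {m : ℕ} (Γ : Finset (Finset (Fin m))) : Finset (Finset (Fin m)) :=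
  Finset.univ.filter fun F => Fᶜ ∉ Γ

/-- squarefree exponent vector of a subset -/
noncomputable def expOf {m : ℕ} (F : Finset (Fin m)) : Mono m := ∑ i ∈ F, Finsupp.single i 1

/-- the Stanley–Reisner ideal of `Γ` -/
noncomputable def srIdeal (K : Type) [Field K] {m : ℕ} (Γ : Finset (Finset (Fin m))) :
    Ideal (MvPolynomial (Fin m) K) :=
  Ideal.span ((fun F : Finset (Fin m) => monomial (expOf F) (1 : K)) '' {F | F ∉ Γ})

/-- `Γ` is shifted -/
def Shifted {m : ℕ} (Γ : Finset (Finset (Fin m))) : Prop :=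
  ∀ F ∈ Γ, ∀ j ∈ F, ∀ i : Fin m, j < i → i ∉ F → insert i (F.erase j) ∈ Γ

/-- number of faces of `Γ` of cardinality `k` (that is, `f_{k-1}(Γ)`) -/
def fNum {m : ℕ} (Γ : Finset (Finset (Fin m))) (k : ℕ) : ℕ :=
  (Γ.filter fun F => F.card = k).card

/-- the `h`-vector of a `(D-1)`-dimensional complex:
`hNum Γ D k = h_k(Γ) = Σ_{i=0}^{k} (-1)^{k-i} C(D-i, k-i) f_{i-1}(Γ)` -/
def hNum {m : ℕ} (Γ : Finset (Finset (Fin m))) (D k : ℕ) : ℤ :=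
  ∑ i ∈ Finset.range (k + 1),
    (-1 : ℤ) ^ (k - i) * (Nat.choose (D - i) (k - i) : ℤ) * (fNum Γ i : ℤ)

/-- `S/I` is Cohen–Macaulay: there is a regular sequence on `S/I` consisting of elements of
the graded maximal ideal whose length equals the Krull dimension of `S/I`. -/
def IsCM (K : Type) [Field K] {m : ℕ} (I : Ideal (MvPolynomial (Fin m) K)) : Prop :=
  ∃ rs : List (MvPolynomial (Fin m) K),
    (∀ r ∈ rs, constantCoeff r = 0) ∧
    RingTheory.Sequence.IsRegular (MvPolynomial (Fin m) K ⧸ I)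
      (rs.map (Ideal.Quotient.mk I)) ∧
    (rs.length : WithBot (WithTop ℕ)) = ringKrullDim (MvPolynomial (Fin m) K ⧸ I)

/-!
The minimal generators of `I_{Γ*}` are the monomials `x^{Fᶜ}` for `F` a facet of `Γ`, so `I_{Γ*}` is
generated in degree `d` exactly when `Γ` is pure, and the exchange condition on monomials of
`I_{Γ*}` is shiftedness of `Γ`. What remains is that a shifted complex is Cohen–Macaulay if and only
if it is pure.

If `Γ` is Cohen–Macaulay, then a regular sequence on `S/I_Γ` is no longer than the dimension of
`S/P` for any associated prime `P`; a facet `F` gives an associated prime of dimension `#F`, so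
all facets have the same size. Conversely, a pure shifted `Γ` is shelled by adding its facets in
decreasing colexicographic order: the faces contributed by `F` are those between `R(F)` and `F`,
where `R(F)` is the part of `F` below the largest vertex outside `F`. Along a shelling, the
sequences `0 → S/(J : a) → S/J → S/(J + (a)) → 0` with `a = x^{R(F)}` show inductively that the
elementary symmetric polynomials form a regular sequence.

The same shelling shows that the `h`-polynomial of `Γ` is `∑ X^{#R(F)}`. Since `R(F)` and `Fᶜ`
partition the vertices up to the largest one outside `F`, `max(x^{Fᶜ}) = #R(F) + d`, which
identifies the two sequences.
-/

section RegularSequences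

open RingTheory.Sequence
open scoped Pointwise

variable {R : Type*} [CommRing R] {rs : List R}

section Exact

variable {M₁ M₂ M₃ : Type*} [AddCommGroup M₁] [AddCommGroup M₂] [AddCommGroup M₃]
  [Module R M₁] [Module R M₂] [Module R M₃] {f : M₁ →ₗ[R] M₂} {g : M₂ →ₗ[R] M₃}

lemma quotSMulTop_map_injective_of_exact {r : R} (hf : Function.Injective f)
    (hfg : Function.Exact f g) (hr : IsSMulRegular M₃ r) :
    Function.Injective (QuotSMulTop.map r f) := by
  have hf' : Function.Exact (0 : Unit →ₗ[R] M₁) f := fun x => by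
    simp [map_eq_zero_iff f hf, eq_comm]
  have hexact := QuotSMulTop.map_first_exact_on_four_term_exact_of_isSMulRegular_last hf' hfg hr
  refine (injective_iff_map_eq_zero _).2 fun x hx => ?_
  obtain ⟨y, rfl⟩ := (hexact x).1 hx
  simp

lemma isWeaklyRegular_of_exact (hf : Function.Injective f) (hfg : Function.Exact f g)
    (hg : Function.Surjective g) (h₁ : IsWeaklyRegular M₁ rs) (h₃ : IsWeaklyRegular M₃ rs) :
    IsWeaklyRegular M₂ rs := by
  induction h₁ generalizing M₂ M₃ with
  | nil => exact .nil R M₂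
  | cons r rs hr _ ih =>
    rw [isWeaklyRegular_cons_iff] at h₃ ⊢
    exact ⟨isSMulRegular_of_range_eq_ker hf hfg.linearMap_ker_eq.symm hr h₃.1,
      ih (quotSMulTop_map_injective_of_exact hf hfg h₃.1) (QuotSMulTop.map_exact r hfg hg)
        (QuotSMulTop.map_surjective r hg) h₃.2⟩

end Exact

section Quotient

variable {J : Ideal R}

lemma isWeaklyRegular_of_subsingleton (M : Type*) [AddCommGroup M] [Module R M] [Subsingleton M]
    (rs : List R) : IsWeaklyRegular M rs :=
  (isWeaklyRegular_iff M rs).2 fun i _ =>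
    have := (Submodule.mkQ_surjective (Ideal.ofList (rs.take i) • (⊤ : Submodule R M))).subsingleton
    Function.injective_of_subsingleton _

/-- The exact sequence `0 → R/(J : a) → R/J → R/(J + (a)) → 0`, whose first map is multiplication
by `a`, propagates regularity to its middle term. -/
lemma isWeaklyRegular_quotient_of_colon (a : R)
    (hcolon : IsWeaklyRegular (R ⧸ J.colon {a}) rs)
    (hsup : IsWeaklyRegular (R ⧸ (J ⊔ Ideal.span {a})) rs) :
    IsWeaklyRegular (R ⧸ J) rs := by
  have hmul : J.colon {a} = Submodule.comap (LinearMap.mulRight R a) J := by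
    ext p
    simp [Submodule.mem_colon_singleton]
  have hfactor : J ≤ Submodule.comap LinearMap.id (J ⊔ Ideal.span {a}) := le_sup_left
  refine isWeaklyRegular_of_exact (f := Submodule.mapQ _ J (LinearMap.mulRight R a) hmul.le)
    (g := Submodule.mapQ J _ LinearMap.id hfactor) ?_ ?_ ?_ hcolon hsup
  · rw [← LinearMap.ker_eq_bot, Submodule.ker_mapQ, ← hmul, Submodule.mkQ_map_self]
  · rw [LinearMap.exact_iff, Submodule.ker_mapQ, Submodule.range_mapQ, Submodule.comap_id,
      Submodule.map_sup, Submodule.mkQ_map_self, bot_sup_eq]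
    congr 1
    ext p
    simp [Ideal.mem_span_singleton', eq_comm]
  · rw [← LinearMap.range_eq_top, Submodule.range_mapQ, LinearMap.range_id, Submodule.map_top,
      Submodule.range_mkQ]

lemma isWeaklyRegular_quotient_cons_iff {r : R} :
    IsWeaklyRegular (R ⧸ J) (r :: rs) ↔
      IsSMulRegular (R ⧸ J) r ∧ IsWeaklyRegular (R ⧸ (J ⊔ Ideal.span {r})) rs := by
  have htop : r • (⊤ : Submodule R (R ⧸ J)) = Submodule.map J.mkQ (Ideal.span {r}) := by
    rw [← Submodule.ideal_span_singleton_smul, ← Submodule.range_mkQ J, LinearMap.range_eq_map,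
      ← Submodule.map_smul'', smul_eq_mul, Ideal.mul_top]
  let e : QuotSMulTop r (R ⧸ J) ≃ₗ[R] R ⧸ (J ⊔ Ideal.span {r}) :=
    (Submodule.quotEquivOfEq _ _ htop).trans (Submodule.quotientQuotientEquivQuotientSup J _)
  rw [isWeaklyRegular_cons_iff, e.isWeaklyRegular_congr]

lemma isRegular_map_mk_of_isWeaklyRegular {m : Ideal R} (hm : m ≠ ⊤) (hJ : J ≤ m)
    (hrs : ∀ r ∈ rs, r ∈ m) (hreg : IsWeaklyRegular (R ⧸ J) rs) :
    IsRegular (R ⧸ J) (rs.map (Ideal.Quotient.mk J)) := by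
  refine ⟨(isWeaklyRegular_map_algebraMap_iff (R ⧸ J) (R ⧸ J) rs).2 hreg, fun htop => hm ?_⟩
  have hle : Ideal.ofList rs ≤ m := Ideal.span_le.2 hrs
  rw [smul_eq_mul, Ideal.mul_top, ← Ideal.map_ofList] at htop
  rw [← Ideal.comap_map_mk hJ, eq_top_iff.2 (htop.trans_le (Ideal.map_mono hle)), Ideal.comap_top]

end Quotient

end RegularSequences

section AssociatedPrimes

open RingTheory.Sequence

variable {R : Type*} [CommRing R]

section Module

variable {M : Type*} [AddCommGroup M] [Module R M]

lemma quotSMulTop_map_subtype_torsionBySet_injective {x : R} (hx : IsSMulRegular M x)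
    (s : Set R) :
    Function.Injective (QuotSMulTop.map x (Submodule.torsionBySet R M s).subtype) := by
  refine quotSMulTop_map_injective_of_exact (Submodule.subtype_injective _)
    (LinearMap.exact_subtype_mkQ _) ((isSMulRegular_quotient_iff_mem_of_smul_mem _ _).2 ?_)
  intro y hy
  rw [Submodule.mem_torsionBySet_iff] at hy ⊢
  exact fun a => hx (by simpa [smul_comm x] using hy a)

variable [IsNoetherianRing R]

lemma notMem_of_mem_associatedPrimes {P : Ideal R} (hP : P ∈ associatedPrimes R M) {x : R}
    (hx : IsSMulRegular M x) : x ∉ P := by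
  obtain ⟨hprime, y, rfl⟩ := isAssociatedPrime_iff.1 hP
  intro hxy
  have hy : y = 0 := hx (by simpa [Submodule.mem_colon_singleton] using hxy)
  exact hprime.ne_top ((Ideal.eq_top_iff_one _).2 (by simp [Submodule.mem_colon_singleton, hy]))

lemma mem_support_torsionBySet_of_mem_associatedPrimes {P : Ideal R}
    (hP : P ∈ associatedPrimes R M) {m : PrimeSpectrum R} (hPm : P ≤ m.asIdeal) :
    m ∈ Module.support R (Submodule.torsionBySet R M P) := by
  obtain ⟨-, y, hy⟩ := isAssociatedPrime_iff.1 hP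
  have hmem {r : R} : r ∈ P ↔ r • y = 0 := by
    rw [hy, Submodule.mem_colon_singleton, Submodule.mem_bot]
  refine Module.mem_support_iff'.2
    ⟨⟨y, (Submodule.mem_torsionBySet_iff _ _).2 fun a => hmem.1 a.2⟩, fun r hr h => hr (hPm ?_)⟩
  exact hmem.2 (congrArg Subtype.val h)

variable [Module.Finite R M]

lemma exists_mem_associatedPrimes_quotSMulTop {m P : Ideal R} [m.IsPrime]
    (hP : P ∈ associatedPrimes R M) (hPm : P ≤ m) {x : R} (hx : x ∈ m)
    (hreg : IsSMulRegular M x) :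
    ∃ Q ∈ associatedPrimes R (QuotSMulTop x M), P ≤ Q ∧ Q ≤ m ∧ x ∈ Q := by
  let N := Submodule.torsionBySet R M P
  have hsupp : (⟨m, inferInstance⟩ : PrimeSpectrum R) ∈ Module.support R (QuotSMulTop x N) := by
    rw [Module.support_quotSMulTop]
    exact ⟨mem_support_torsionBySet_of_mem_associatedPrimes hP hPm, by simpa using hx⟩
  rw [Module.mem_support_iff_of_finite] at hsupp
  obtain ⟨Q, hQ, hQm⟩ := Ideal.exists_minimalPrimes_le hsupp
  have hPN : P ≤ Module.annihilator R N := fun a ha => Module.mem_annihilator.2 fun z =>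
    Subtype.ext ((Submodule.mem_torsionBySet_iff _ _).1 z.2 ⟨a, ha⟩)
  have hNQ : Module.annihilator R N ≤ Q :=
    (LinearMap.annihilator_le_of_surjective _ (Submodule.mkQ_surjective _)).trans hQ.1.2
  exact ⟨Q, associatedPrimes.subset_of_injective
      (quotSMulTop_map_subtype_torsionBySet_injective hreg P)
      (Module.associatedPrimes.minimalPrimes_annihilator_subset_associatedPrimes R _ hQ),
    hPN.trans hNQ, hQm, hQ.1.2 (QuotSMulTop.mem_annihilator N x)⟩

/-- Passing from `M` to `M/xM` strictly enlarges the prime, so each term of the sequence costs one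
dimension of `R/P`. -/
lemma length_le_ringKrullDim_of_mem_associatedPrimes {m P : Ideal R} [m.IsPrime]
    (hP : P ∈ associatedPrimes R M) (hPm : P ≤ m) {rs : List R} (hrs : ∀ r ∈ rs, r ∈ m)
    (hreg : IsWeaklyRegular M rs) : (rs.length : WithBot ℕ∞) ≤ ringKrullDim (R ⧸ P) := by
  have hprime : P.IsPrime := IsAssociatedPrime.isPrime hP
  induction rs generalizing M P with
  | nil => simpa using ringKrullDim_nonneg_of_nontrivial
  | cons x rs ih =>
    rw [List.forall_mem_cons] at hrs
    rw [isWeaklyRegular_cons_iff] at hreg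
    obtain ⟨Q, hQ, hPQ, hQm, hxQ⟩ := exists_mem_associatedPrimes_quotSMulTop hP hPm hrs.1 hreg.1
    have hxP : Ideal.Quotient.mk P x ≠ 0 := fun h =>
      notMem_of_mem_associatedPrimes hP hreg.1 (Ideal.Quotient.eq_zero_iff_mem.1 h)
    calc ((x :: rs).length : WithBot ℕ∞) = rs.length + 1 := by push_cast [List.length_cons]; rfl
      _ ≤ ringKrullDim (R ⧸ Q) + 1 := by
        gcongr
        exact ih hQ hQm hrs.2 hreg.2 (IsAssociatedPrime.isPrime hQ)
      _ ≤ ringKrullDim (R ⧸ P) :=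
        ringKrullDim_succ_le_of_surjective (Ideal.Quotient.factor hPQ)
          (Ideal.Quotient.factor_surjective hPQ) (mem_nonZeroDivisors_of_ne_zero hxP)
          (by simpa [Ideal.Quotient.eq_zero_iff_mem] using hxQ)

end Module

lemma ringKrullDim_quotient_le_of_forall_isPrime {I : Ideal R} {N : WithBot ℕ∞}
    (h : ∀ P : Ideal R, P.IsPrime → I ≤ P → ringKrullDim (R ⧸ P) ≤ N) :
    ringKrullDim (R ⧸ I) ≤ N := by
  rw [ringKrullDim_quotient, Order.krullDim]
  refine iSup_le fun p => ?_
  let P := p.head.1.asIdeal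
  let q : LTSeries (PrimeSpectrum.zeroLocus (P : Set R)) :=
    { length := p.length
      toFun := fun i => ⟨(p i).1, p.monotone (Fin.zero_le i)⟩
      step := p.step }
  calc (p.length : WithBot ℕ∞) ≤ ringKrullDim (R ⧸ P) :=
        (le_iSup (fun q : LTSeries _ => (q.length : WithBot ℕ∞)) q).trans_eq
          (ringKrullDim_quotient P).symm
    _ ≤ N := h P p.head.1.isPrime p.head.2

end AssociatedPrimes

section StanleyReisner

variable {m : ℕ} {Γ : Finset (Finset (Fin m))}

section Monomials

lemma expOf_apply (F : Finset (Fin m)) (i : Fin m) : expOf F i = if i ∈ F then 1 else 0 := by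
  simp [expOf, Finsupp.finsetSum_apply, Finsupp.single_apply]

@[simp]
lemma support_expOf (F : Finset (Fin m)) : (expOf F).support = F := by
  ext i
  simp [expOf_apply]

lemma expOf_le_iff {F : Finset (Fin m)} {u : Mono m} : expOf F ≤ u ↔ F ⊆ u.support := by
  simp only [Finsupp.le_def, expOf_apply, Finset.subset_iff, Finsupp.mem_support_iff]
  refine forall_congr' fun i => ?_
  split_ifs with h <;> simp [h, Nat.one_le_iff_ne_zero]

lemma support_add_expOf (u : Mono m) (F : Finset (Fin m)) :
    (u + expOf F).support = u.support ∪ F := by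
  ext i
  by_cases h : i ∈ F <;> simp [expOf_apply, h]

lemma monomial_expOf (F : Finset (Fin m)) : monomial (expOf F) (1 : K) = ∏ i ∈ F, X i := by
  simp only [expOf, X, monomial_sum_one]

end Monomials

section Membership

lemma mem_srIdeal (hΓ : IsComplex Γ) {p : MvPolynomial (Fin m) K} :
    p ∈ srIdeal K Γ ↔ ∀ u ∈ p.support, u.support ∉ Γ := by
  rw [srIdeal, ← Set.image_image (fun u => monomial u (1 : K)) expOf, mem_ideal_span_monomial_image]
  refine forall₂_congr fun u _ => ⟨?_, fun h => ⟨_, ⟨_, h, rfl⟩, expOf_le_iff.2 subset_rfl⟩⟩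
  rintro ⟨_, ⟨F, hF, rfl⟩, h⟩ h'
  exact hF (hΓ _ h' _ (expOf_le_iff.1 h))

lemma monomial_mem_srIdeal (hΓ : IsComplex Γ) {u : Mono m} :
    monomial u (1 : K) ∈ srIdeal K Γ ↔ u.support ∉ Γ := by
  classical
  rw [mem_srIdeal hΓ]
  simp [support_monomial]

lemma monomial_expOf_mem_srIdeal (hΓ : IsComplex Γ) {F : Finset (Fin m)} :
    monomial (expOf F) (1 : K) ∈ srIdeal K Γ ↔ F ∉ Γ := by
  rw [monomial_mem_srIdeal hΓ, support_expOf]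

lemma srIdeal_eq_top_of_empty_notMem (hΓ : ∅ ∉ Γ) : srIdeal K Γ = ⊤ :=
  (Ideal.eq_top_iff_one _).2 (Ideal.subset_span ⟨∅, hΓ, by simp [monomial_expOf]⟩)

lemma srIdeal_le_ker_constantCoeff (hΓ : ∅ ∈ Γ) :
    srIdeal K Γ ≤ RingHom.ker (constantCoeff : MvPolynomial (Fin m) K →+* K) := by
  refine Ideal.span_le.2 ?_
  rintro _ ⟨F, hF, rfl⟩
  obtain ⟨i, hi⟩ := Finset.nonempty_iff_ne_empty.2 fun h : F = ∅ => hF (h ▸ hΓ)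
  simp only [monomial_expOf, SetLike.mem_coe, RingHom.mem_ker, map_prod, constantCoeff_X]
  exact Finset.prod_eq_zero hi rfl

end Membership

section StarDeletion

variable {α : Type*} [DecidableEq α]

/-- The closed star of `G` in `Γ`: the faces whose union with `G` is a face. -/
def closedStar [Fintype α] (Γ : Finset (Finset α)) (G : Finset α) : Finset (Finset α) :=
  Finset.univ.filter fun F => F ∪ G ∈ Γ

/-- The deletion of the face `G` from `Γ`: the faces which do not contain `G`. -/
def faceDeletion (Γ : Finset (Finset α)) (G : Finset α) : Finset (Finset α) :=
  Γ.filter fun F => ¬ G ⊆ F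

lemma mem_closedStar [Fintype α] {Γ : Finset (Finset α)} {F G : Finset α} :
    F ∈ closedStar Γ G ↔ F ∪ G ∈ Γ := by
  simp [closedStar]

lemma mem_faceDeletion {Γ : Finset (Finset α)} {F G : Finset α} :
    F ∈ faceDeletion Γ G ↔ F ∈ Γ ∧ ¬ G ⊆ F :=
  Finset.mem_filter

lemma isComplex_powerset (F : Finset (Fin m)) : IsComplex F.powerset := fun _ hG _ hH =>
  Finset.mem_powerset.2 (hH.trans (Finset.mem_powerset.1 hG))

lemma IsComplex.closedStar (hΓ : IsComplex Γ) (G : Finset (Fin m)) :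
    IsComplex (closedStar Γ G) := fun _ hF _ hH =>
  mem_closedStar.2 (hΓ _ (mem_closedStar.1 hF) _ (Finset.union_subset_union_left hH))

lemma IsComplex.faceDeletion (hΓ : IsComplex Γ) (G : Finset (Fin m)) :
    IsComplex (faceDeletion Γ G) := fun F hF H hH => by
  rw [mem_faceDeletion] at hF ⊢
  exact ⟨hΓ F hF.1 H hH, fun h => hF.2 (h.trans hH)⟩

lemma srIdeal_colon_monomial (hΓ : IsComplex Γ) (G : Finset (Fin m)) :
    (srIdeal K Γ).colon {monomial (expOf G) (1 : K)} = srIdeal K (closedStar Γ G) := by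
  ext p
  simp only [Submodule.mem_colon_singleton, smul_eq_mul, mem_srIdeal hΓ,
    mem_srIdeal (hΓ.closedStar G), mem_closedStar, mem_support_iff]
  refine ⟨fun h u hu => ?_, fun h u hu => ?_⟩
  · rw [← support_add_expOf]
    exact h _ (by simpa [coeff_mul_monomial] using hu)
  · rw [coeff_mul_monomial'] at hu
    obtain ⟨hle, hu⟩ := ite_ne_right_iff.1 hu
    obtain ⟨v, rfl⟩ := exists_add_of_le hle
    rw [add_comm, support_add_expOf]
    exact h v (by simpa using hu)

lemma srIdeal_faceDeletion (Γ : Finset (Finset (Fin m))) (G : Finset (Fin m)) :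
    srIdeal K (faceDeletion Γ G) = srIdeal K Γ ⊔ Ideal.span {monomial (expOf G) (1 : K)} := by
  apply le_antisymm
  · refine Ideal.span_le.2 ?_
    rintro _ ⟨F, hF, rfl⟩
    by_cases hFΓ : F ∈ Γ
    · have hGF : G ⊆ F := not_not.1 fun h => hF (mem_faceDeletion.2 ⟨hFΓ, h⟩)
      refine Ideal.mem_sup_right (Ideal.mem_span_singleton.2 (monomial_dvd_monomial.2 ?_))
      exact ⟨Or.inr (expOf_le_iff.2 (by rwa [support_expOf])), one_dvd _⟩
    · exact Ideal.mem_sup_left (Ideal.subset_span ⟨F, hFΓ, rfl⟩)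
  · refine sup_le (Ideal.span_mono (Set.image_mono fun F hF h => hF (mem_faceDeletion.1 h).1)) ?_
    rw [Ideal.span_singleton_le_iff_mem]
    exact Ideal.subset_span ⟨G, fun h => (mem_faceDeletion.1 h).2 subset_rfl, rfl⟩

end StarDeletion

end StanleyReisner

section Simplices

variable {m : ℕ} {Γ : Finset (Finset (Fin m))}

lemma srIdeal_powerset_eq_ker (F : Finset (Fin m)) :
    srIdeal K F.powerset =
      RingHom.ker (killCompl (R := K) (Subtype.val_injective (p := (· ∈ F)))) := by
  ext p
  simp only [mem_srIdeal (isComplex_powerset F), Finset.mem_powerset, RingHom.mem_ker,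
    MvPolynomial.ext_iff, coeff_killCompl, coeff_zero, mem_support_iff]
  refine ⟨fun h s => ?_, fun h u hu huF => hu ?_⟩
  · by_contra hs
    refine h _ hs fun i hi => ?_
    obtain ⟨j, -, rfl⟩ := Finset.mem_image.1 (Finsupp.mapDomain_support hi)
    exact j.2
  · rw [← Finsupp.mapDomain_comapDomain _ (Subtype.val_injective (p := (· ∈ F))) u
      (by simpa using huF)]
    exact h _

instance isPrime_srIdeal_powerset (F : Finset (Fin m)) : (srIdeal K F.powerset).IsPrime := by
  rw [srIdeal_powerset_eq_ker]
  exact RingHom.ker_isPrime _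

lemma ringKrullDim_srIdeal_powerset (F : Finset (Fin m)) :
    ringKrullDim (MvPolynomial (Fin m) K ⧸ srIdeal K F.powerset) = F.card := by
  have hsurj : Function.Surjective (killCompl (R := K) (Subtype.val_injective (p := (· ∈ F)))) :=
    fun q => ⟨_, killCompl_rename_app _ q⟩
  rw [srIdeal_powerset_eq_ker]
  exact (ringKrullDim_eq_of_ringEquiv (RingHom.quotientKerEquivOfSurjective hsurj)).trans (by simp)

lemma srIdeal_anti {Γ' : Finset (Finset (Fin m))} (h : Γ ⊆ Γ') : srIdeal K Γ' ≤ srIdeal K Γ :=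
  Ideal.span_mono (Set.image_mono fun _ hF hF' => hF (h hF'))

lemma srIdeal_le_iff_of_isPrime {P : Ideal (MvPolynomial (Fin m) K)} [hP : P.IsPrime] :
    srIdeal K Γ ≤ P ↔ ∀ F ∉ Γ, ∃ i ∈ F, X i ∈ P := by
  simp only [srIdeal, Ideal.span_le, Set.subset_def, Set.forall_mem_image, Set.mem_ofPred_eq,
    SetLike.mem_coe, monomial_expOf, hP.prod_mem_iff]

/-- A prime containing `I_Γ` contains the ideal of the simplex on the variables it omits. -/
lemma ringKrullDim_srIdeal_le {k : ℕ} (hk : ∀ F ∈ Γ, F.card ≤ k) :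
    ringKrullDim (MvPolynomial (Fin m) K ⧸ srIdeal K Γ) ≤ k := by
  classical
  refine ringKrullDim_quotient_le_of_forall_isPrime fun P hP hΓP => ?_
  rw [srIdeal_le_iff_of_isPrime] at hΓP
  let F : Finset (Fin m) := Finset.univ.filter fun i => X i ∉ P
  have hFΓ : F ∈ Γ := by
    by_contra hF
    obtain ⟨i, hi, hiP⟩ := hΓP F hF
    exact (Finset.mem_filter.1 hi).2 hiP
  have hFP : srIdeal K F.powerset ≤ P := srIdeal_le_iff_of_isPrime.2 fun G hG => by
    obtain ⟨i, hiG, hiF⟩ := Finset.not_subset.1 (mt Finset.mem_powerset.2 hG)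
    exact ⟨i, hiG, by simpa [F] using hiF⟩
  calc ringKrullDim (MvPolynomial (Fin m) K ⧸ P)
      ≤ ringKrullDim (MvPolynomial (Fin m) K ⧸ srIdeal K F.powerset) :=
        ringKrullDim_le_of_surjective _ (Ideal.Quotient.factor_surjective hFP)
    _ = F.card := ringKrullDim_srIdeal_powerset F
    _ ≤ k := mod_cast hk F hFΓ

lemma card_le_ringKrullDim_srIdeal (hΓ : IsComplex Γ) {F : Finset (Fin m)} (hF : F ∈ Γ) :
    F.card ≤ ringKrullDim (MvPolynomial (Fin m) K ⧸ srIdeal K Γ) := by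
  have hle : srIdeal K Γ ≤ srIdeal K F.powerset :=
    srIdeal_anti fun G hG => hΓ F hF G (Finset.mem_powerset.1 hG)
  exact (ringKrullDim_srIdeal_powerset (K := K) F).ge.trans
    (ringKrullDim_le_of_surjective _ (Ideal.Quotient.factor_surjective hle))

end Simplices

section SymmetricFunctions

open RingTheory.Sequence

variable {m : ℕ} {Γ : Finset (Finset (Fin m))}

lemma isWeaklyRegular_srIdeal_of_empty_notMem (hΓ : ∅ ∉ Γ) (rs : List (MvPolynomial (Fin m) K)) :
    IsWeaklyRegular (MvPolynomial (Fin m) K ⧸ srIdeal K Γ) rs :=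
  have := Ideal.Quotient.subsingleton_iff.2 (srIdeal_eq_top_of_empty_notMem (K := K) hΓ)
  isWeaklyRegular_of_subsingleton _ _

lemma isWeaklyRegular_of_closedStar_of_faceDeletion {rs : List (MvPolynomial (Fin m) K)}
    (hΓ : IsComplex Γ) (G : Finset (Fin m))
    (hstar : IsWeaklyRegular (MvPolynomial (Fin m) K ⧸ srIdeal K (closedStar Γ G)) rs)
    (hdel : IsWeaklyRegular (MvPolynomial (Fin m) K ⧸ srIdeal K (faceDeletion Γ G)) rs) :
    IsWeaklyRegular (MvPolynomial (Fin m) K ⧸ srIdeal K Γ) rs := by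
  rw [← srIdeal_colon_monomial hΓ] at hstar
  rw [srIdeal_faceDeletion] at hdel
  exact isWeaklyRegular_quotient_of_colon _ hstar hdel

lemma isWeaklyRegular_faceDeletion_powerset {rs : List (MvPolynomial (Fin m) K)}
    {F G : Finset (Fin m)} (hG : G ⊆ F)
    (h : ∀ i ∈ G, IsWeaklyRegular (MvPolynomial (Fin m) K ⧸ srIdeal K (F.erase i).powerset) rs) :
    IsWeaklyRegular (MvPolynomial (Fin m) K ⧸ srIdeal K (faceDeletion F.powerset G)) rs := by
  induction G using Finset.induction_on with
  | empty =>
    exact isWeaklyRegular_srIdeal_of_empty_notMem (by simp [mem_faceDeletion]) rs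
  | insert i G hi ih =>
    rw [Finset.insert_subset_iff] at hG
    rw [Finset.forall_mem_insert] at h
    have hstar : closedStar (faceDeletion F.powerset (insert i G)) {i} =
        faceDeletion F.powerset G := by
      ext H
      simp only [mem_closedStar, mem_faceDeletion, Finset.mem_powerset, hG.1,
        Finset.union_comm H {i}, ← Finset.insert_eq, Finset.insert_subset_iff,
        Finset.mem_insert_self, true_and, Finset.subset_insert_iff_of_notMem hi]
    have hdel : faceDeletion (faceDeletion F.powerset (insert i G)) {i} = (F.erase i).powerset := by
      ext H
      simp only [mem_faceDeletion, Finset.mem_powerset, Finset.insert_subset_iff,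
        Finset.singleton_subset_iff, Finset.subset_erase]
      tauto
    refine isWeaklyRegular_of_closedStar_of_faceDeletion ((isComplex_powerset F).faceDeletion _)
      {i} ?_ ?_
    · exact hstar ▸ ih hG.2 h.2
    · exact hdel ▸ h.1

/-- The elementary symmetric polynomials of degrees `k, k - 1, …, 1`. They serve as the regular
sequence: modulo the ideal of a simplex with `k` vertices the first one is the monomial of that
simplex. -/
noncomputable def esymmList (σ R : Type*) [Fintype σ] [CommSemiring R] :
    ℕ → List (MvPolynomial σ R)
  | 0 => []
  | k + 1 => esymm σ R (k + 1) :: esymmList σ R k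

@[simp]
lemma length_esymmList (σ R : Type*) [Fintype σ] [CommSemiring R] (k : ℕ) :
    (esymmList σ R k).length = k := by
  induction k with
  | zero => rfl
  | succ k ih => simp [esymmList, ih]

lemma constantCoeff_of_mem_esymmList {σ R : Type*} [Fintype σ] [CommSemiring R] {k : ℕ}
    {r : MvPolynomial σ R} (hr : r ∈ esymmList σ R k) : constantCoeff r = 0 := by
  induction k with
  | zero => simp [esymmList] at hr
  | succ k ih =>
    obtain rfl | hr := List.mem_cons.1 hr
    · simp only [esymm, map_sum, map_prod, constantCoeff_X]
      refine Finset.sum_eq_zero fun t ht => ?_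
      rw [Finset.prod_const, (Finset.mem_powersetCard.1 ht).2, zero_pow k.succ_ne_zero]
    · exact ih hr

lemma esymm_card_sub_monomial_mem_srIdeal_powerset (F : Finset (Fin m)) :
    esymm (Fin m) K F.card - monomial (expOf F) 1 ∈ srIdeal K F.powerset := by
  rw [esymm, ← Finset.add_sum_erase _ _ (Finset.mem_powersetCard.2 ⟨F.subset_univ, rfl⟩),
    monomial_expOf, add_sub_cancel_left]
  refine Ideal.sum_mem _ fun G hG => ?_
  rw [Finset.mem_erase, Finset.mem_powersetCard_univ] at hG
  rw [← monomial_expOf, monomial_expOf_mem_srIdeal (isComplex_powerset F), Finset.mem_powerset]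
  exact fun hGF => hG.1 (Finset.eq_of_subset_of_card_le hGF hG.2.ge)

lemma isSMulRegular_esymm_card_srIdeal_powerset (F : Finset (Fin m)) :
    IsSMulRegular (MvPolynomial (Fin m) K ⧸ srIdeal K F.powerset) (esymm (Fin m) K F.card) := by
  refine (isSMulRegular_quotient_iff_mem_of_smul_mem _ _).2 fun p hp =>
    ((isPrime_srIdeal_powerset F).mem_or_mem hp).resolve_left fun h => ?_
  have := (Submodule.sub_mem_iff_right _ h).1 (esymm_card_sub_monomial_mem_srIdeal_powerset F)
  simp [monomial_expOf_mem_srIdeal (isComplex_powerset F)] at this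

lemma srIdeal_powerset_sup_span_esymm_card (F : Finset (Fin m)) :
    srIdeal K F.powerset ⊔ Ideal.span {esymm (Fin m) K F.card} =
      srIdeal K (faceDeletion F.powerset F) := by
  rw [srIdeal_faceDeletion, ← Ideal.comap_map_quotientMk, ← Ideal.comap_map_quotientMk,
    Ideal.map_span, Ideal.map_span, Set.image_singleton, Set.image_singleton,
    Ideal.Quotient.eq.2 (esymm_card_sub_monomial_mem_srIdeal_powerset F)]

lemma isWeaklyRegular_esymmList_powerset (F : Finset (Fin m)) :
    IsWeaklyRegular (MvPolynomial (Fin m) K ⧸ srIdeal K F.powerset)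
      (esymmList (Fin m) K F.card) := by
  induction hk : F.card generalizing F with
  | zero => exact .nil _ _
  | succ k ih =>
    rw [esymmList, isWeaklyRegular_quotient_cons_iff, ← hk, srIdeal_powerset_sup_span_esymm_card]
    refine ⟨isSMulRegular_esymm_card_srIdeal_powerset F,
      isWeaklyRegular_faceDeletion_powerset subset_rfl fun i hi => ih _ ?_⟩
    rw [Finset.card_erase_of_mem hi, hk, Nat.add_sub_cancel]

end SymmetricFunctions

section Shellings

variable {α : Type*} [DecidableEq α] {𝓕 Γ : Finset (Finset α)} {F G : Finset α}

/-- The facets of `Γ`: its faces that are maximal under inclusion. -/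
def facets (Γ : Finset (Finset α)) : Finset (Finset α) :=
  Γ.filter fun F => ∀ G ∈ Γ, F ⊆ G → G ⊆ F

/-- `Γ` is pure of dimension `k - 1`: all its facets have `k` elements. -/
def IsPure (Γ : Finset (Finset α)) (k : ℕ) : Prop :=
  ∀ F ∈ facets Γ, F.card = k

/-- The simplicial complex generated by a family of finite sets. -/
def generatedComplex (𝓕 : Finset (Finset α)) : Finset (Finset α) :=
  𝓕.biUnion Finset.powerset

/-- A family is shelled with restriction map `R` if its members can be added one at a time so that
the faces contributed by a new member `F` are those between `R F` and `F`. The order of the shelling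
is kept inside the inductive predicate, and equal cardinalities are not required. -/
inductive IsShelling (R : Finset α → Finset α) : Finset (Finset α) → Prop
  | empty : IsShelling R ∅
  | insert {𝓕 : Finset (Finset α)} {F : Finset α} : IsShelling R 𝓕 → R F ⊆ F →
      (∀ G ⊆ F, G ∈ generatedComplex 𝓕 ↔ ¬ R F ⊆ G) → IsShelling R (insert F 𝓕)

lemma mem_facets : F ∈ facets Γ ↔ Maximal (· ∈ Γ) F := by
  simp only [facets, Finset.mem_filter, Maximal]

lemma mem_generatedComplex : G ∈ generatedComplex 𝓕 ↔ ∃ F ∈ 𝓕, G ⊆ F := by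
  simp [generatedComplex]

lemma mem_generatedComplex_of_subset {H : Finset α} (hG : G ∈ generatedComplex 𝓕) (hH : H ⊆ G) :
    H ∈ generatedComplex 𝓕 := by
  obtain ⟨F, hF, hGF⟩ := mem_generatedComplex.1 hG
  exact mem_generatedComplex.2 ⟨F, hF, hH.trans hGF⟩

lemma generatedComplex_insert (F : Finset α) (𝓕 : Finset (Finset α)) :
    generatedComplex (insert F 𝓕) = F.powerset ∪ generatedComplex 𝓕 :=
  Finset.biUnion_insert

lemma exists_mem_facets_superset (hF : F ∈ Γ) : ∃ G ∈ facets Γ, F ⊆ G := by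
  obtain ⟨G, hFG, hG⟩ := Γ.exists_le_maximal hF
  exact ⟨G, mem_facets.2 hG, hFG⟩

lemma IsPure.mem_facets_iff {k : ℕ} (hΓ : IsPure Γ k) : F ∈ facets Γ ↔ F ∈ Γ ∧ F.card = k := by
  refine ⟨fun hF => ⟨(mem_facets.1 hF).prop, hΓ F hF⟩, fun ⟨hF, hk⟩ => ?_⟩
  obtain ⟨G, hG, hFG⟩ := exists_mem_facets_superset hF
  rwa [Finset.eq_of_subset_of_card_le hFG (by rw [hΓ G hG, hk])]

lemma isAntichain_facets (Γ : Finset (Finset α)) :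
    IsAntichain (· ⊆ ·) (facets Γ : Set (Finset α)) := fun _ hF _ hG hne hFG =>
  hne ((mem_facets.1 hF).eq_of_le (mem_facets.1 hG).prop hFG)

section Step

variable {R : Finset α → Finset α} (hF : ∀ G ⊆ F, G ∈ generatedComplex 𝓕 ↔ ¬ R F ⊆ G)
include hF

lemma not_restriction_subset_of_mem_generatedComplex (hRF : R F ⊆ F)
    (hG : G ∈ generatedComplex 𝓕) : ¬ R F ⊆ G := fun h =>
  (hF (R F) hRF).1 (mem_generatedComplex_of_subset hG h) subset_rfl

lemma closedStar_generatedComplex_insert [Fintype α] (hRF : R F ⊆ F) :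
    closedStar (generatedComplex (insert F 𝓕)) (R F) = F.powerset := by
  ext G
  rw [mem_closedStar, generatedComplex_insert, Finset.mem_union, Finset.mem_powerset,
    Finset.mem_powerset, Finset.union_subset_iff, and_iff_left hRF, or_iff_left]
  exact fun h => not_restriction_subset_of_mem_generatedComplex hF hRF h Finset.subset_union_right

lemma faceDeletion_generatedComplex_insert (hRF : R F ⊆ F) :
    faceDeletion (generatedComplex (insert F 𝓕)) (R F) = generatedComplex 𝓕 := by
  ext G
  rw [mem_faceDeletion, generatedComplex_insert, Finset.mem_union, Finset.mem_powerset]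
  constructor
  · rintro ⟨hGF | hG, hRG⟩
    · exact (hF G hGF).2 hRG
    · exact hG
  · exact fun hG => ⟨Or.inr hG, not_restriction_subset_of_mem_generatedComplex hF hRF hG⟩

end Step

end Shellings

section CohenMacaulay

open RingTheory.Sequence

variable {m k : ℕ} {Γ 𝓕 : Finset (Finset (Fin m))} {R : Finset (Fin m) → Finset (Fin m)}

lemma isComplex_generatedComplex (𝓕 : Finset (Finset (Fin m))) :
    IsComplex (generatedComplex 𝓕) := fun _ hF _ => mem_generatedComplex_of_subset hF

lemma generatedComplex_facets (hΓ : IsComplex Γ) : generatedComplex (facets Γ) = Γ := by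
  ext G
  rw [mem_generatedComplex]
  exact ⟨fun ⟨F, hF, hGF⟩ => hΓ F (mem_facets.1 hF).prop G hGF, exists_mem_facets_superset⟩

lemma IsShelling.isWeaklyRegular {rs : List (MvPolynomial (Fin m) K)} (h : IsShelling R 𝓕)
    (hrs : ∀ F ∈ 𝓕, IsWeaklyRegular (MvPolynomial (Fin m) K ⧸ srIdeal K F.powerset) rs) :
    IsWeaklyRegular (MvPolynomial (Fin m) K ⧸ srIdeal K (generatedComplex 𝓕)) rs := by
  induction h with
  | empty => exact isWeaklyRegular_srIdeal_of_empty_notMem (by simp [mem_generatedComplex]) rs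
  | @insert 𝓕 F _ hRF hF ih =>
    rw [Finset.forall_mem_insert] at hrs
    refine isWeaklyRegular_of_closedStar_of_faceDeletion (isComplex_generatedComplex _) (R F) ?_ ?_
    · rw [closedStar_generatedComplex_insert hF hRF]
      exact hrs.1
    · rw [faceDeletion_generatedComplex_insert hF hRF]
      exact ih hrs.2

theorem IsShelling.isCM (h : IsShelling R 𝓕) (hne : 𝓕.Nonempty) (hcard : ∀ F ∈ 𝓕, F.card = k) :
    IsCM K (srIdeal K (generatedComplex 𝓕)) := by
  obtain ⟨F, hF⟩ := hne
  have hmem : ∀ G ⊆ F, G ∈ generatedComplex 𝓕 := fun G hG => mem_generatedComplex.2 ⟨F, hF, hG⟩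
  have hle : ∀ G ∈ generatedComplex 𝓕, G.card ≤ k := fun G hG => by
    obtain ⟨F, hF, hGF⟩ := mem_generatedComplex.1 hG
    exact (Finset.card_le_card hGF).trans (hcard F hF).le
  have hconst : ∀ r ∈ esymmList (Fin m) K k, constantCoeff r = 0 := fun _ =>
    constantCoeff_of_mem_esymmList
  refine ⟨esymmList (Fin m) K k, hconst, ?_, ?_⟩
  · refine isRegular_map_mk_of_isWeaklyRegular (RingHom.ker_ne_top constantCoeff)
      (srIdeal_le_ker_constantCoeff (hmem ∅ F.empty_subset)) hconst (h.isWeaklyRegular ?_)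
    exact fun G hG => hcard G hG ▸ isWeaklyRegular_esymmList_powerset G
  · rw [length_esymmList]
    refine le_antisymm ?_ (ringKrullDim_srIdeal_le hle)
    rw [← hcard F hF]
    exact card_le_ringKrullDim_srIdeal (isComplex_generatedComplex 𝓕) (hmem F subset_rfl)

lemma srIdeal_powerset_mem_associatedPrimes (hΓ : IsComplex Γ) {F : Finset (Fin m)}
    (hF : F ∈ facets Γ) :
    srIdeal K F.powerset ∈
      associatedPrimes (MvPolynomial (Fin m) K) (MvPolynomial (Fin m) K ⧸ srIdeal K Γ) := by
  have hstar : closedStar Γ F = F.powerset := by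
    ext G
    rw [mem_closedStar, Finset.mem_powerset]
    refine ⟨fun h => ?_, fun h => ?_⟩
    · exact Finset.union_subset_iff.1 ((mem_facets.1 hF).2 h Finset.subset_union_right) |>.1
    · rw [Finset.union_eq_right.2 h]
      exact (mem_facets.1 hF).prop
  refine isAssociatedPrime_iff.2
    ⟨isPrime_srIdeal_powerset F, Ideal.Quotient.mk _ (monomial (expOf F) 1), ?_⟩
  ext p
  rw [← hstar, ← srIdeal_colon_monomial hΓ, Submodule.mem_colon_singleton,
    Submodule.mem_colon_singleton, Submodule.mem_bot, ← Ideal.Quotient.eq_zero_iff_mem]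
  rfl

lemma card_le_card_of_isCM (hΓ : IsComplex Γ) (hCM : IsCM K (srIdeal K Γ)) {F G : Finset (Fin m)}
    (hF : F ∈ facets Γ) (hG : G ∈ Γ) : G.card ≤ F.card := by
  obtain ⟨rs, hconst, hreg, hdim⟩ := hCM
  have hweak : IsWeaklyRegular (MvPolynomial (Fin m) K ⧸ srIdeal K Γ) rs :=
    (isWeaklyRegular_map_algebraMap_iff (MvPolynomial (Fin m) K ⧸ srIdeal K Γ) _ rs).1
      hreg.toIsWeaklyRegular
  have hprime : (RingHom.ker (constantCoeff (R := K) (σ := Fin m))).IsPrime := RingHom.ker_isPrime _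
  have hle : (G.card : WithBot ℕ∞) ≤ F.card :=
    calc (G.card : WithBot ℕ∞)
        ≤ ringKrullDim (MvPolynomial (Fin m) K ⧸ srIdeal K Γ) := card_le_ringKrullDim_srIdeal hΓ hG
      _ = rs.length := hdim.symm
      _ ≤ ringKrullDim (MvPolynomial (Fin m) K ⧸ srIdeal K F.powerset) :=
        length_le_ringKrullDim_of_mem_associatedPrimes (srIdeal_powerset_mem_associatedPrimes hΓ hF)
          (srIdeal_le_ker_constantCoeff (Finset.empty_mem_powerset F)) hconst hweak
      _ = F.card := ringKrullDim_srIdeal_powerset F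
  exact_mod_cast hle

end CohenMacaulay

section HVector

open scoped Polynomial

section HPolynomial

/-- The `h`-polynomial of a simplicial complex of dimension `D - 1`, in terms of which
`∑ f_{i-1} X^i (1 - X)^(D - i) = ∑ h_j X^j`. The exponent is truncated on faces with more than `D`
elements. -/
noncomputable def hPoly {α : Type*} (Γ : Finset (Finset α)) (D : ℕ) : ℤ[X] :=
  ∑ H ∈ Γ, Polynomial.X ^ H.card * (1 - Polynomial.X) ^ (D - H.card)

lemma coeff_one_sub_X_pow (a b : ℕ) :
    ((1 - Polynomial.X : ℤ[X]) ^ a).coeff b = (-1) ^ b * (a.choose b : ℤ) := by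
  have h : (1 - Polynomial.X : ℤ[X]) =
      (1 + Polynomial.X).comp (Polynomial.C (-1) * Polynomial.X) := by
    simp [sub_eq_add_neg]
  rw [h, ← Polynomial.pow_comp, Polynomial.comp_C_mul_X_coeff, Polynomial.coeff_one_add_X_pow,
    mul_comm]

lemma coeff_hPoly {m : ℕ} (Γ : Finset (Finset (Fin m))) (D j : ℕ) :
    (hPoly Γ D).coeff j = hNum Γ D j := by
  have hterm (H : Finset (Fin m)) :
      (Polynomial.X ^ H.card * (1 - Polynomial.X : ℤ[X]) ^ (D - H.card)).coeff j =
        ∑ i ∈ Finset.range (j + 1),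
          if H.card = i then (-1) ^ (j - i) * ((D - i).choose (j - i) : ℤ) else 0 := by
    simp only [Polynomial.coeff_X_pow_mul', coeff_one_sub_X_pow, Finset.sum_ite_eq,
      Finset.mem_range, Nat.lt_succ_iff]
  simp only [hPoly, Polynomial.finsetSum_coeff, hterm, hNum, fNum]
  rw [Finset.sum_comm]
  refine Finset.sum_congr rfl fun i _ => ?_
  rw [← Finset.sum_filter, Finset.sum_const, nsmul_eq_mul, mul_comm]

end HPolynomial

variable {α : Type*} [DecidableEq α]

lemma sum_Icc_pow_card_mul_one_sub_pow {A : Type*} [CommRing A] (x : A) {G F : Finset α}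
    (hGF : G ⊆ F) :
    ∑ H ∈ Finset.Icc G F, x ^ H.card * (1 - x) ^ (F.card - H.card) = x ^ G.card := by
  have hdisj : ∀ B ∈ (F \ G).powerset, Disjoint G B := fun B hB =>
    Finset.disjoint_of_subset_right (Finset.mem_powerset.1 hB) Finset.disjoint_sdiff
  have hinj : Set.InjOn (G ∪ ·) ((F \ G).powerset : Set (Finset α)) := fun B hB C hC h => by
    rw [← Finset.union_sdiff_cancel_left (hdisj B hB),
      ← Finset.union_sdiff_cancel_left (hdisj C hC)]
    exact congrArg (· \ G) h
  calc ∑ H ∈ Finset.Icc G F, x ^ H.card * (1 - x) ^ (F.card - H.card)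
      = ∑ B ∈ (F \ G).powerset, x ^ (G ∪ B).card * (1 - x) ^ (F.card - (G ∪ B).card) := by
        rw [Finset.Icc_eq_image_powerset hGF, Finset.sum_image hinj]
    _ = ∑ B ∈ (F \ G).powerset,
          x ^ G.card * (x ^ B.card * (1 - x) ^ ((F \ G).card - B.card)) := by
        refine Finset.sum_congr rfl fun B hB => ?_
        rw [Finset.card_union_of_disjoint (hdisj B hB), pow_add, mul_assoc,
          Finset.card_sdiff_of_subset hGF, Nat.sub_sub]
    _ = x ^ G.card := by
        rw [← Finset.mul_sum, Finset.sum_pow_mul_eq_add_pow, add_sub_cancel, one_pow, mul_one]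

variable {R : Finset α → Finset α} {𝓕 : Finset (Finset α)} {k : ℕ}

lemma generatedComplex_insert_eq_union_Icc {F : Finset α}
    (hF : ∀ G ⊆ F, G ∈ generatedComplex 𝓕 ↔ ¬ R F ⊆ G) :
    generatedComplex (insert F 𝓕) = Finset.Icc (R F) F ∪ generatedComplex 𝓕 := by
  ext G
  rw [generatedComplex_insert, Finset.mem_union, Finset.mem_union, Finset.mem_powerset,
    Finset.mem_Icc]
  have := hF G
  tauto

lemma IsShelling.hPoly_generatedComplex (h : IsShelling R 𝓕) (hcard : ∀ F ∈ 𝓕, F.card = k) :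
    hPoly (generatedComplex 𝓕) k = ∑ F ∈ 𝓕, Polynomial.X ^ (R F).card := by
  induction h with
  | empty => simp [generatedComplex, hPoly]
  | @insert 𝓕 F _ hRF hF ih =>
    rw [Finset.forall_mem_insert] at hcard
    have hnot {G} (hG : G ∈ generatedComplex 𝓕) : ¬ R F ⊆ G :=
      not_restriction_subset_of_mem_generatedComplex hF hRF hG
    have hdisj : Disjoint (Finset.Icc (R F) F) (generatedComplex 𝓕) :=
      Finset.disjoint_left.2 fun G hG hG' => hnot hG' (Finset.mem_Icc.1 hG).1
    have hF𝓕 : F ∉ 𝓕 := fun h => hnot (mem_generatedComplex.2 ⟨F, h, subset_rfl⟩) hRF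
    rw [Finset.sum_insert hF𝓕, ← ih hcard.2, ← sum_Icc_pow_card_mul_one_sub_pow _ hRF, hcard.1,
      hPoly, generatedComplex_insert_eq_union_Icc hF, Finset.sum_union hdisj, hPoly]

theorem IsShelling.hNum_generatedComplex {m : ℕ} {R : Finset (Fin m) → Finset (Fin m)}
    {𝓕 : Finset (Finset (Fin m))} (h : IsShelling R 𝓕) (hcard : ∀ F ∈ 𝓕, F.card = k) (j : ℕ) :
    hNum (generatedComplex 𝓕) k j = (𝓕.filter fun F => (R F).card = j).card := by
  rw [← coeff_hPoly, h.hPoly_generatedComplex hcard]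
  simp only [Polynomial.finsetSum_coeff, Polynomial.coeff_X_pow, Finset.sum_boole, eq_comm]

end HVector

section Shifted

variable {m k : ℕ} {Γ 𝓕 : Finset (Finset (Fin m))} {F G : Finset (Fin m)}

/-- The part of `F` lying below the largest vertex outside `F`; it is the restriction map of the
shelling of a pure shifted complex. -/
def restriction (F : Finset (Fin m)) : Finset (Fin m) :=
  F.filter fun x => ∃ y, y ∉ F ∧ x < y

lemma mem_restriction {x : Fin m} : x ∈ restriction F ↔ x ∈ F ∧ ∃ y, y ∉ F ∧ x < y := by
  simp only [restriction, Finset.mem_filter]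

lemma toColex_lt_toColex_insert_erase {i j : Fin m} (hj : j ∈ F) (hi : i ∉ F) (hji : j < i) :
    toColex F < toColex (insert i (F.erase j)) := by
  have hi' : i ∉ F.erase j := fun h => hi (Finset.mem_of_mem_erase h)
  conv_lhs => rw [← Finset.insert_erase hj]
  exact (Finset.Colex.insert_lt_insert (Finset.notMem_erase j F) hi').2 hji

lemma Shifted.of_insert_of_toColex_le (h : Shifted (insert F 𝓕))
    (hmin : ∀ G ∈ 𝓕, toColex F ≤ toColex G) : Shifted 𝓕 := fun G hG j hj i hji hi => by
  refine Finset.mem_of_mem_insert_of_ne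
    (h G (Finset.mem_insert_of_mem hG) j hj i hji hi) fun heq => ?_
  have hlt := (hmin G hG).trans_lt (toColex_lt_toColex_insert_erase hj hi hji)
  exact hlt.ne' (congrArg toColex heq)

lemma mem_generatedComplex_iff_not_restriction_subset (h : Shifted (insert F 𝓕)) (hF : F ∉ 𝓕)
    (hanti : IsAntichain (· ⊆ ·) (insert F 𝓕 : Set (Finset (Fin m))))
    (hmin : ∀ G ∈ 𝓕, toColex F ≤ toColex G) (hGF : G ⊆ F) :
    G ∈ generatedComplex 𝓕 ↔ ¬ restriction F ⊆ G := by
  rw [mem_generatedComplex]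
  constructor
  · rintro ⟨F', hF', hGF'⟩ hRG
    have hne : F ≠ F' := fun heq => hF (heq ▸ hF')
    obtain ⟨x, hxF, hxF'⟩ := Finset.not_subset.1
      (hanti (Set.mem_insert F _) (Set.mem_insert_of_mem F hF') hne)
    obtain ⟨y, -, hyF, hxy⟩ := Finset.Colex.toColex_le_toColex.1 (hmin F' hF') hxF hxF'
    have hx : x ∈ restriction F :=
      mem_restriction.2 ⟨hxF, y, hyF, hxy.lt_of_ne fun heq => hyF (heq ▸ hxF)⟩
    exact hxF' (hGF' (hRG hx))
  · intro hRG
    obtain ⟨x, hx, hxG⟩ := Finset.not_subset.1 hRG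
    obtain ⟨hxF, y, hyF, hxy⟩ := mem_restriction.1 hx
    have hne : insert y (F.erase x) ≠ F := fun heq => hyF (heq ▸ Finset.mem_insert_self y _)
    exact ⟨insert y (F.erase x), Finset.mem_of_mem_insert_of_ne
      (h F (Finset.mem_insert_self F 𝓕) x hxF y hxy hyF) hne,
      (Finset.subset_erase.2 ⟨hGF, hxG⟩).trans (Finset.subset_insert _ _)⟩

theorem Shifted.isShelling (h : Shifted 𝓕)
    (hanti : IsAntichain (· ⊆ ·) (𝓕 : Set (Finset (Fin m)))) : IsShelling restriction 𝓕 := by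
  induction 𝓕 using Finset.induction_on_min_value (f := toColex (α := Finset (Fin m))) with
  | empty => exact .empty
  | insert F 𝓕 hF hmin ih =>
    rw [Finset.coe_insert] at hanti
    exact .insert (ih (h.of_insert_of_toColex_le hmin) (hanti.subset (Set.subset_insert _ _)))
      (Finset.filter_subset _ F)
      fun G hGF => mem_generatedComplex_iff_not_restriction_subset h hF hanti hmin hGF

lemma shifted_facets (h : Shifted Γ) (hpure : IsPure Γ k) : Shifted (facets Γ) := by
  intro F hF j hj i hji hi
  rw [hpure.mem_facets_iff] at hF ⊢
  have hi' : i ∉ F.erase j := fun h => hi (Finset.mem_of_mem_erase h)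
  refine ⟨h F hF.1 j hj i hji hi, ?_⟩
  rw [Finset.card_insert_of_notMem hi', Finset.card_erase_add_one hj, hF.2]

theorem Shifted.isShelling_facets (h : Shifted Γ) (hpure : IsPure Γ k) :
    IsShelling restriction (facets Γ) :=
  (shifted_facets h hpure).isShelling (isAntichain_facets Γ)

lemma isPure_of_isCM (hΓ : IsComplex Γ) (hCM : IsCM K (srIdeal K Γ)) (hle : ∀ F ∈ Γ, F.card ≤ k)
    (hk : ∃ F ∈ Γ, F.card = k) : IsPure Γ k := fun F hF => by
  obtain ⟨G, hG, rfl⟩ := hk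
  exact (hle F (mem_facets.1 hF).prop).antisymm (card_le_card_of_isCM hΓ hCM hF hG)

theorem isCM_and_shifted_iff (hΓ : IsComplex Γ) (hle : ∀ F ∈ Γ, F.card ≤ k)
    (hk : ∃ F ∈ Γ, F.card = k) :
    IsCM K (srIdeal K Γ) ∧ Shifted Γ ↔ IsPure Γ k ∧ Shifted Γ := by
  refine and_congr_left fun hS => ⟨fun hCM => isPure_of_isCM hΓ hCM hle hk, fun hpure => ?_⟩
  obtain ⟨F, hF, -⟩ := hk
  obtain ⟨G, hG, -⟩ := exists_mem_facets_superset hF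
  rw [← generatedComplex_facets hΓ]
  exact (hS.isShelling_facets hpure).isCM ⟨G, hG⟩ hpure

theorem hNum_eq_card_restriction (hΓ : IsComplex Γ) (hS : Shifted Γ) (hpure : IsPure Γ k) (j : ℕ) :
    hNum Γ k j = ((facets Γ).filter fun F => (restriction F).card = j).card := by
  rw [← (hS.isShelling_facets hpure).hNum_generatedComplex hpure, generatedComplex_facets hΓ]

end Shifted

section AlexanderDual

variable {m k d : ℕ} {Γ : Finset (Finset (Fin m))}

lemma isComplex_alexDual (hΓ : IsComplex Γ) : IsComplex (alexDual Γ) := by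
  intro F hF G hGF
  simp only [alexDual, Finset.mem_filter, Finset.mem_univ, true_and] at hF ⊢
  exact fun hG => hF (hΓ _ hG _ (Finset.compl_subset_compl.2 hGF))

lemma monomial_mem_srIdeal_alexDual (hΓ : IsComplex Γ) {u : Mono m} :
    monomial u (1 : K) ∈ srIdeal K (alexDual Γ) ↔ u.supportᶜ ∈ Γ := by
  rw [monomial_mem_srIdeal (isComplex_alexDual hΓ)]
  simp [alexDual]

lemma minGen_srIdeal_alexDual_iff (hΓ : IsComplex Γ) {u : Mono m} :
    MinGen (srIdeal K (alexDual Γ)) u ↔ ∃ F ∈ facets Γ, expOf Fᶜ = u := by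
  simp only [MinGen, monomial_mem_srIdeal_alexDual hΓ]
  constructor
  · rintro ⟨hu, hmin⟩
    obtain ⟨F, hF, huF⟩ := exists_mem_facets_superset hu
    refine ⟨F, hF, by_contra fun hne => hmin _ ?_ hne ?_⟩
    · rw [expOf_le_iff]
      exact compl_le_iff_compl_le.1 huF
    · rw [support_expOf, compl_compl]
      exact (mem_facets.1 hF).prop
  · rintro ⟨F, hF, rfl⟩
    rw [mem_facets] at hF
    refine ⟨by simpa using hF.prop, fun v hv hne hmem => hne (hv.antisymm ?_)⟩
    have hFv : F ⊆ v.supportᶜ := by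
      rw [Finset.subset_compl_comm, ← support_expOf Fᶜ]
      exact Finsupp.support_mono hv
    rw [expOf_le_iff, hF.eq_of_le hmem hFv, compl_compl]

lemma mdeg_expOf (F : Finset (Fin m)) : mdeg (expOf F) = F.card := by
  rw [mdeg, Finsupp.sum, support_expOf, Finset.card_eq_sum_ones]
  exact Finset.sum_congr rfl fun i hi => by rw [expOf_apply, if_pos hi]

theorem forall_minGen_mdeg_eq_iff (hΓ : IsComplex Γ) (hm : m = k + d) :
    (∀ u, MinGen (srIdeal K (alexDual Γ)) u → mdeg u = d) ↔ IsPure Γ k := by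
  simp only [minGen_srIdeal_alexDual_iff hΓ, forall_exists_index, and_imp,
    forall_apply_eq_imp_iff₂, mdeg_expOf, IsPure]
  refine forall₂_congr fun F _ => ?_
  have := F.card_add_card_compl
  rw [Fintype.card_fin] at this
  omega

lemma sqFree_expOf (F : Finset (Fin m)) : SqFree (expOf F) := fun i => by
  rw [expOf_apply]
  split_ifs <;> simp

lemma sqMonomialIdeal_srIdeal_alexDual (hΓ : IsComplex Γ) :
    SqMonomialIdeal (srIdeal K (alexDual Γ)) := by
  refine ⟨fun p hp u hu => ?_, fun u hu => ?_⟩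
  · rw [monomial_mem_srIdeal (isComplex_alexDual hΓ)]
    exact (mem_srIdeal (isComplex_alexDual hΓ)).1 hp u hu
  · obtain ⟨F, -, rfl⟩ := (minGen_srIdeal_alexDual_iff hΓ).1 hu
    exact sqFree_expOf Fᶜ

lemma compl_support_sub_single_add_single {u : Mono m} {p q : Fin m} (hpq : p ≠ q)
    (hu : SqFree u) :
    (u - Finsupp.single q 1 + Finsupp.single p 1).supportᶜ = insert q (u.supportᶜ.erase p) := by
  ext i
  have hi := hu i
  simp only [Finset.mem_compl, Finsupp.mem_support_iff, Finsupp.add_apply, Finsupp.tsub_apply,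
    Finsupp.single_apply, Finset.mem_insert, Finset.mem_erase]
  grind

theorem sqSStableIdeal_srIdeal_alexDual_iff (hΓ : IsComplex Γ) :
    SqSStableIdeal (srIdeal K (alexDual Γ)) ↔ Shifted Γ := by
  constructor
  · intro h F hF p hp q hpq hq
    have hp0 : expOf Fᶜ p = 0 := by simp [expOf_apply, hp]
    have hq1 : expOf Fᶜ q = 1 := by simp [expOf_apply, hq]
    have hmem : monomial (expOf Fᶜ) (1 : K) ∈ srIdeal K (alexDual Γ) := by
      rwa [monomial_mem_srIdeal_alexDual hΓ, support_expOf, compl_compl]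
    have hexch := h.2 _ (sqFree_expOf Fᶜ) hmem p q hpq hq1 hp0
    rwa [monomial_mem_srIdeal_alexDual hΓ,
      compl_support_sub_single_add_single hpq.ne (sqFree_expOf Fᶜ), support_expOf,
      compl_compl] at hexch
  · refine fun h => ⟨sqMonomialIdeal_srIdeal_alexDual hΓ, fun u hu hmem p q hpq hq hp => ?_⟩
    rw [monomial_mem_srIdeal_alexDual hΓ] at hmem ⊢
    rw [compl_support_sub_single_add_single hpq.ne hu]
    exact h _ hmem p (by simp [hp]) q hpq (by simp [hq])

theorem maxVar_expOf_compl (F : Finset (Fin m)) :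
    maxVar (expOf Fᶜ) = (restriction F).card + Fᶜ.card := by
  have hunion : (Finset.univ.filter fun x : Fin m => (x : ℕ) < maxVar (expOf Fᶜ)) =
      restriction F ∪ Fᶜ := by
    ext x
    simp only [maxVar, support_expOf, Finset.mem_filter, Finset.mem_univ, true_and,
      Finset.lt_sup_iff, Finset.mem_compl, Nat.lt_succ_iff, Fin.val_fin_le, Finset.mem_union,
      mem_restriction]
    grind
  have hdisj : Disjoint (restriction F) Fᶜ :=
    Finset.disjoint_of_subset_left (Finset.filter_subset _ F) disjoint_compl_right
  have hle : maxVar (expOf Fᶜ) ≤ m := Finset.sup_le fun i _ => i.isLt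
  rw [← Finset.card_union_of_disjoint hdisj, ← hunion, Fin.card_filter_val_lt, min_eq_right hle]

theorem card_filter_maxVar_eq_card_restriction (hΓ : IsComplex Γ) (hpure : IsPure Γ k)
    (hm : m = k + d) {G : Finset (Mono m)}
    (hG : ∀ u, u ∈ G ↔ MinGen (srIdeal K (alexDual Γ)) u) (j : ℕ) :
    (G.filter fun u => maxVar u = j + d).card =
      ((facets Γ).filter fun F => (restriction F).card = j).card := by
  have hinj : Function.Injective fun F : Finset (Fin m) => expOf Fᶜ := fun F F' h => by
    simpa using congrArg Finsupp.support h
  have himage : G = (facets Γ).image fun F => expOf Fᶜ := by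
    ext u
    rw [hG, minGen_srIdeal_alexDual_iff hΓ, Finset.mem_image]
  rw [himage, Finset.filter_image, Finset.card_image_of_injective _ hinj]
  congr 1
  refine Finset.filter_congr fun F hF => ?_
  have hcompl := F.card_add_card_compl
  rw [hpure F hF, Fintype.card_fin] at hcompl
  rw [maxVar_expOf_compl]
  omega

end AlexanderDual

/-- Eagon–Reiner-type correspondence: `Γ` is Cohen–Macaulay and shifted
iff `I_{Γ*}` is squarefree strongly stable generated in degree `d`; moreover then
`ℓ*(I_{Γ*}) = h(Γ)`. -/
theorem stmt17 (n d : ℕ) (hn : 0 < n) (hd : 0 < d) (K : Type) [Field K]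
    (Γ : Finset (Finset (Fin (n + d - 1)))) (hΓ : IsComplex Γ)
    (hdim : (∀ F ∈ Γ, F.card ≤ n - 1) ∧ ∃ F ∈ Γ, F.card = n - 1) :
    ((IsCM K (srIdeal K Γ) ∧ Shifted Γ) ↔
      (SqSStableIdeal (srIdeal K (alexDual Γ)) ∧
        ∀ u : Mono (n + d - 1), MinGen (srIdeal K (alexDual Γ)) u → mdeg u = d)) ∧
    ((IsCM K (srIdeal K Γ) ∧ Shifted Γ) →
      ∀ G : Finset (Mono (n + d - 1)),
        (∀ u, u ∈ G ↔ MinGen (srIdeal K (alexDual Γ)) u) →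
        ∀ k : Fin n,
          ((G.filter fun u => maxVar u = (k : ℕ) + d).card : ℤ) =
            hNum Γ (n - 1) (k : ℕ)) := by
  have hm : n + d - 1 = (n - 1) + d := by omega
  have hCM := isCM_and_shifted_iff (K := K) hΓ hdim.1 hdim.2
  refine ⟨?_, fun h G hG j => ?_⟩
  · rw [hCM, sqSStableIdeal_srIdeal_alexDual_iff hΓ, forall_minGen_mdeg_eq_iff hΓ hm, and_comm]
  · obtain ⟨hpure, hS⟩ := hCM.1 h
    rw [card_filter_maxVar_eq_card_restriction hΓ hpure hm hG, hNum_eq_card_restriction hΓ hS hpure]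

end Paper
end
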